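/- arXiv:1708.08118 — 7 statements merged into one kernel-verified Lean document; each statement's English description precedes it below -/
import Mathlib

section
/- Let T be a finite semigroup, let T̃ denote the monoid obtained from T by first adjoining a new identity and then adjoining a new zero, and let M be any monoid with |M| > |T|. Then T^♭ embeds into the wreath product M ≀ T̃; that is, there exists an injective semigroup homomorphism from T^♭ into M ≀ T̃. -/
/-- Self-maps of `α` under the composition product `(f * g) x = f (g x)`. -/
structure CompFun (α : Type) where
  toFun : α → α

instance {α : Type} : Semigroup (CompFun α) where
  mul f g := ⟨fun x => f.toFun (g.toFun x)⟩
  mul_assoc _ _ _ := rfl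

instance {α : Type} [Finite α] : Finite (CompFun α) :=
  Finite.of_surjective (fun f : α → α => CompFun.mk f) fun f => ⟨f.toFun, rfl⟩

/-- Self-maps of `α` under the opposite composition product `(f * g) x = g (f x)`. -/
structure OpCompFun (α : Type) where
  toFun : α → α

instance {α : Type} : Semigroup (OpCompFun α) where
  mul f g := ⟨fun x => g.toFun (f.toFun x)⟩
  mul_assoc _ _ _ := rfl

instance {α : Type} [Finite α] : Finite (OpCompFun α) :=
  Finite.of_surjective (fun f : α → α => OpCompFun.mk f) fun f => ⟨f.toFun, rfl⟩

/-- `T^♭`: the subsemigroup of self-maps of `T^I = WithOne T` (under the product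
`(f * g) x = f (g x)`) consisting of the left translations by elements of `T`
and the constant maps. -/
def Flat (T : Type) [Semigroup T] : Subsemigroup (CompFun (WithOne T)) where
  carrier := {f | (∃ t : T, f.toFun = fun x => ↑t * x) ∨ ∃ cst : WithOne T, f.toFun = fun _ => cst}
  mul_mem' := by
    rintro f g (⟨t, ht⟩ | ⟨cf, hf⟩) (⟨t', ht'⟩ | ⟨cg, hg⟩)
    · refine Or.inl ⟨t * t', funext fun x => ?_⟩
      show f.toFun (g.toFun x) = _
      rw [ht, ht']
      simp [mul_assoc]
    · refine Or.inr ⟨↑t * cg, funext fun x => ?_⟩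
      show f.toFun (g.toFun x) = _
      rw [ht, hg]
    · refine Or.inr ⟨cf, funext fun x => ?_⟩
      show f.toFun (g.toFun x) = _
      rw [hf]
    · refine Or.inr ⟨cf, funext fun x => ?_⟩
      show f.toFun (g.toFun x) = _
      rw [hf]

/-- `T^♯`: the subsemigroup of self-maps of `T^I = WithOne T` (under the product
`(f * g) x = g (f x)`) consisting of the right translations by elements of `T`
and the constant maps. -/
def Sharp (T : Type) [Semigroup T] : Subsemigroup (OpCompFun (WithOne T)) where
  carrier := {f | (∃ t : T, f.toFun = fun x => x * ↑t) ∨ ∃ cst : WithOne T, f.toFun = fun _ => cst}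
  mul_mem' := by
    rintro f g (⟨t, ht⟩ | ⟨cf, hf⟩) (⟨t', ht'⟩ | ⟨cg, hg⟩)
    · refine Or.inl ⟨t * t', funext fun x => ?_⟩
      show g.toFun (f.toFun x) = _
      rw [ht, ht']
      simp [mul_assoc]
    · refine Or.inr ⟨cg, funext fun x => ?_⟩
      show g.toFun (f.toFun x) = _
      rw [hg]
    · refine Or.inr ⟨cf * ↑t', funext fun x => ?_⟩
      show g.toFun (f.toFun x) = _
      rw [ht', hf]
    · refine Or.inr ⟨cg, funext fun x => ?_⟩
      show g.toFun (f.toFun x) = _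
      rw [hg]

instance (T : Type) [Finite T] : Finite (WithOne T) := by
  have := Fintype.ofFinite T
  exact Finite.of_fintype (Option T)


theorem flat_aux_kh (T : Type) [Semigroup T] [Finite T] (M : Type) [Monoid M]
    (hcard : Cardinal.mk T < Cardinal.mk M) :
    ∃ (k : WithZero (WithOne T)) (h : WithZero (WithOne T) → M),
      (∀ s : WithOne T, k * (WithZero.coe s) = k) ∧
      (∀ t : T, (∀ x : WithOne T, WithOne.coe t * x = WithOne.coe t) →
        (WithZero.coe (WithOne.coe t)) * k = (WithZero.coe (WithOne.coe t))) ∧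
      k * k = k ∧ (∀ x, x * k = x → h x = 1) ∧
      (∀ s s' : WithOne T, h (WithZero.coe s) = h (WithZero.coe s') → s = s' ∨
        ((WithZero.coe s) * k = WithZero.coe s ∧ (WithZero.coe s') * k = WithZero.coe s')) := by
  classical
  have hle : Cardinal.mk (WithOne T) ≤ Cardinal.mk M := by
    have h1 : Cardinal.mk (WithOne T) = Cardinal.mk T + 1 := Cardinal.mk_option
    rw [h1]
    exact Cardinal.add_one_le_of_lt hcard
  obtain ⟨e⟩ := hle
  by_cases hl : ∃ l : T, ∀ x : WithOne T, WithOne.coe l * x = WithOne.coe l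
  · obtain ⟨l, hl⟩ := hl
    let e' : WithOne T → M := fun s => Equiv.swap (e (WithOne.coe l)) 1 (e s)
    have he' : Function.Injective e' := (Equiv.injective _).comp e.injective
    have hel : e' (WithOne.coe l) = 1 := by simp [e']
    have hll : (WithZero.coe (WithOne.coe l)) * (WithZero.coe (WithOne.coe l)) = (WithZero.coe (WithOne.coe l)) := by
      rw [← WithZero.coe_mul, hl]
    refine ⟨(WithZero.coe (WithOne.coe l)),
      fun x => if x * (WithZero.coe (WithOne.coe l)) = x then 1 else
        WithZero.recZeroCoe 1 e' x, ?_, ?_, hll, ?_, ?_⟩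
    · intro s
      rw [← WithZero.coe_mul, hl]
    · intro t ht
      rw [← WithZero.coe_mul, ht]
    · intro x hx
      simp only [hx, if_true]
    · intro s s' h
      by_cases h1 : (WithZero.coe s) * (WithZero.coe (WithOne.coe l)) = WithZero.coe s <;>
      by_cases h2 : (WithZero.coe s') * (WithZero.coe (WithOne.coe l)) = WithZero.coe s'
      · exact Or.inr ⟨h1, h2⟩
      · simp only [h1, h2, if_true, if_false] at h
        have : WithOne.coe l = s' := he' (hel.trans h)
        exact absurd (this ▸ hll) h2
      · simp only [h1, h2, if_true, if_false] at h
        have : WithOne.coe l = s := he' (hel.trans h.symm)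
        exact absurd (this ▸ hll) h1
      · simp only [h1, h2, if_false] at h
        exact Or.inl (he' h)
  · refine ⟨0, fun x => WithZero.recZeroCoe 1 e x, ?_, ?_, ?_, ?_, ?_⟩
    · intro s; simp
    · intro t ht; exact absurd ⟨t, ht⟩ hl
    · simp
    · intro x hx
      rw [mul_zero] at hx
      subst hx
      rfl
    · intro s s' h
      exact Or.inl (e.injective h)

/-- Let `T` be a finite semigroup, let `T̃ = WithZero (WithOne T)` be the
monoid obtained from `T` by adjoining a new identity and then a new zero, and let `M` be any
monoid with `|M| > |T|`.  Then `T^♭` embeds in the wreath product `M ≀ T̃`, i.e. there is an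
injective map `f` from `T^♭` to `(T̃ → M) × T̃` which is a homomorphism for the wreath-product
multiplication `(f, n)(f', n') = (x ↦ f x * f' (x n), n n')`. -/
theorem flat_embeds_wreath
    (T : Type) [Semigroup T] [Finite T] (M : Type) [Monoid M]
    (hcard : Cardinal.mk T < Cardinal.mk M) :
    ∃ f : ↥(Flat T) → (WithZero (WithOne T) → M) × WithZero (WithOne T),
      Function.Injective f ∧
      ∀ a b : ↥(Flat T), f (a * b) =
        ((fun x => (f a).1 x * (f b).1 (x * (f a).2)), (f a).2 * (f b).2) := by
  classical
  obtain ⟨k, h, P1, P2, P3, H1, H2⟩ := flat_aux_kh T M hcard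
  let C : ↥(Flat T) → Prop := fun a => ∀ x, a.1.toFun x = a.1.toFun 1
  let F : ↥(Flat T) → (WithZero (WithOne T) → M) × WithZero (WithOne T) := fun a =>
    if C a then (fun x => h (x * WithZero.coe (a.1.toFun 1)), (WithZero.coe (a.1.toFun 1)) * k)
    else (fun _ => 1, WithZero.coe (a.1.toFun 1))
  have hk0 : ∀ x y : WithZero (WithOne T), h (x * k) = 1 := fun x _ =>
    H1 _ (by rw [mul_assoc, P3])
  have Fc : ∀ (a : ↥(Flat T)) (c : WithOne T), (a.1.toFun = fun _ => c) →
      F a = (fun x => h (x * WithZero.coe c), WithZero.coe c * k) := by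
    intro a c ha
    have : C a := fun x => by rw [ha]
    simp only [F, if_pos this, ha]
  have Fl : ∀ (a : ↥(Flat T)) (t : T), (a.1.toFun = fun x => WithOne.coe t * x) →
      F a = (fun _ => 1, (WithZero.coe (WithOne.coe t))) := by
    intro a t ha
    by_cases hc : C a
    · have ht : ∀ x : WithOne T, WithOne.coe t * x = WithOne.coe t := fun x => by
        have := hc x
        rw [ha] at this
        simpa using this
      have e1 := P2 t ht
      rw [Fc a (WithOne.coe t) (by rw [ha]; exact funext ht), e1]
      refine Prod.ext (funext fun x => ?_) rfl
      exact H1 _ (by rw [mul_assoc, e1])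
    · simp only [F, if_neg hc, ha, mul_one]
  have mix : ∀ (a b : ↥(Flat T)) (t : T) (c : WithOne T), (a.1.toFun = fun x => WithOne.coe t * x) →
      (b.1.toFun = fun _ => c) → F a = F b → a.1.toFun = b.1.toFun := by
    intro a b t c ha hb hab
    rw [Fl a t ha, Fc b c hb] at hab
    have h1 := congrFun (congrArg Prod.fst hab) 1
    have h2 := congrArg Prod.snd hab
    simp only [one_mul] at h1 h2
    have htk : (WithZero.coe (WithOne.coe t)) * k = WithZero.coe (WithOne.coe t) := by
      rw [h2, mul_assoc, P3]
    have hct : WithOne.coe t = c := by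
      rcases H2 (WithOne.coe t) c ((H1 _ htk).trans h1) with h3 | ⟨_, h3⟩
      · exact h3
      · exact WithZero.coe_injective (h2.trans h3)
    rw [ha, hb, ← hct]
    funext x
    apply WithZero.coe_injective
    rw [WithZero.coe_mul, ← htk, mul_assoc, P1]
  have ext' : ∀ a b : ↥(Flat T), a.1.toFun = b.1.toFun → a = b := by
    rintro ⟨⟨a⟩, _⟩ ⟨⟨b⟩, _⟩ hab
    cases hab
    rfl
  refine ⟨F, ?_, ?_⟩
  · intro a b hab
    apply ext'
    rcases a.2 with ⟨t, ha⟩ | ⟨c, ha⟩ <;> rcases b.2 with ⟨t', hb⟩ | ⟨c', hb⟩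
    · rw [Fl a t ha, Fl b t' hb] at hab
      have h2 : WithOne.coe t = WithOne.coe t' := WithZero.coe_injective (congrArg Prod.snd hab)
      rw [ha, hb, h2]
    · exact mix a b t c' ha hb hab
    · exact (mix b a t' c hb ha hab.symm).symm
    · rw [Fc a c ha, Fc b c' hb] at hab
      have h1 := congrFun (congrArg Prod.fst hab) 1
      have h2 := congrArg Prod.snd hab
      simp only [one_mul] at h1 h2
      have : c = c' := by
        rcases H2 _ _ h1 with h3 | ⟨h3, h4⟩
        · exact h3
        · exact WithZero.coe_injective (h3.symm.trans (h2.trans h4))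
      rw [ha, hb, this]
  · intro a b
    have hm : ∀ x, (a * b).1.toFun x = a.1.toFun (b.1.toFun x) := fun _ => rfl
    rcases a.2 with ⟨t, ha⟩ | ⟨c, ha⟩ <;> rcases b.2 with ⟨t', hb⟩ | ⟨c', hb⟩
    · rw [Fl (a * b) (t * t') (by funext x; rw [hm, ha, hb]; simp [mul_assoc]),
        Fl a t ha, Fl b t' hb]
      simp
    · rw [Fc (a * b) (WithOne.coe t * c') (by funext x; rw [hm, ha, hb]), Fl a t ha, Fc b c' hb]
      simp [mul_assoc]
    · rw [Fc (a * b) c (by funext x; rw [hm, ha]), Fc a c ha, Fl b t' hb]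
      simp [mul_assoc, P1]
    · rw [Fc (a * b) c (by funext x; rw [hm, ha]), Fc a c ha, Fc b c' hb]
      refine Prod.ext (funext fun x => ?_) ?_
      · show _ = h (x * WithZero.coe c) * h (x * (WithZero.coe c * k) * WithZero.coe c')
        rw [mul_assoc x, mul_assoc _ k, P1, ← mul_assoc, hk0 _ 1, mul_one]
      · show _ = WithZero.coe c * k * (WithZero.coe c' * k)
        rw [mul_assoc, ← mul_assoc k, P1, P3]
end

section
/- With the notation of the merge construction below, the map f : T_M → T₂^I × T₀^I × T₁^I defined by f(r, s, l) := (r(I₂), s(I₁, I₂), l(I₁)) satisfies f ∘ ψ_M = τ. In particular, there exists a function f : T_M → T₂^I × T₀^I × T₁^I with f ∘ ψ_M = τ. -/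
/-- The data of a triple product `(S_R, S, S_L)`: a left action of `S_L` and a right
action of `S_R` on `S` satisfying the triple-product axioms. -/
structure TripleData (SR S SL : Type) [Semigroup SR] [Semigroup S] [Semigroup SL] where
  lact : SL → S → S
  ract : S → SR → S
  lact_mul : ∀ l s s', lact l (s * s') = lact l s * lact l s'
  mul_ract : ∀ s s' r, ract (s * s') r = ract s r * ract s' r
  mul_lact : ∀ l l' s, lact (l * l') s = lact l (lact l' s)
  ract_mul : ∀ s r r', ract s (r * r') = ract (ract s r) r'
  lact_ract : ∀ l s r, ract (lact l s) r = lact l (ract s r)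

/-- The underlying set of the triple product `(S_R, S, S_L)`. -/
structure Triple {SR S SL : Type} [Semigroup SR] [Semigroup S] [Semigroup SL]
    (d : TripleData SR S SL) where
  fst : SR
  snd : S
  trd : SL

instance {SR S SL : Type} [Semigroup SR] [Semigroup S] [Semigroup SL]
    (d : TripleData SR S SL) : Mul (Triple d) :=
  ⟨fun a b => ⟨a.fst * b.fst, d.ract a.snd b.fst * d.lact a.trd b.snd, a.trd * b.trd⟩⟩

theorem Triple.mul_def {SR S SL : Type} [Semigroup SR] [Semigroup S] [Semigroup SL]
    {d : TripleData SR S SL} (a b : Triple d) :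
    a * b = ⟨a.fst * b.fst, d.ract a.snd b.fst * d.lact a.trd b.snd, a.trd * b.trd⟩ := rfl

/-- The triple product is a semigroup. -/
instance {SR S SL : Type} [Semigroup SR] [Semigroup S] [Semigroup SL]
    (d : TripleData SR S SL) : Semigroup (Triple d) where
  mul_assoc a b c := by
    simp only [Triple.mul_def, Triple.mk.injEq]
    refine ⟨mul_assoc _ _ _, ?_, mul_assoc _ _ _⟩
    simp only [d.mul_ract, d.mul_lact, d.ract_mul, d.lact_mul, d.lact_ract, mul_assoc]

instance {SR S SL : Type} [Semigroup SR] [Semigroup S] [Semigroup SL]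
    [Finite SR] [Finite S] [Finite SL] (d : TripleData SR S SL) : Finite (Triple d) :=
  Finite.of_surjective (fun p : SR × S × SL => Triple.mk p.1 p.2.1 p.2.2)
    fun t => ⟨(t.fst, t.snd, t.trd), rfl⟩
/-- The triple-product data of the merge semigroup: the semigroup of all functions
`T₁^I × T₂^I → T₀^I` under pointwise product, with the left action of `T₁^♯` given by
`(l · s) (t₁, t₂) = s (l t₁, t₂)` and the right action of `T₂^♭` given by
`(s · r) (t₁, t₂) = s (t₁, r t₂)`. -/
def mergeData (T₀ T₁ T₂ : Type) [Semigroup T₀] [Semigroup T₁] [Semigroup T₂] :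
    TripleData (↥(Flat T₂)) ((WithOne T₁ × WithOne T₂) → WithOne T₀) (↥(Sharp T₁)) where
  lact l s := fun p => s ((l : OpCompFun (WithOne T₁)).toFun p.1, p.2)
  ract s r := fun p => s (p.1, (r : CompFun (WithOne T₂)).toFun p.2)
  lact_mul _ _ _ := rfl
  mul_ract _ _ _ := rfl
  mul_lact _ _ _ := rfl
  ract_mul _ _ _ := rfl
  lact_ract _ _ _ := rfl

/-- The image of the nonempty word `a :: l` under the unique semigroup homomorphism
`A⁺ → T` extending the generator map `g : A → T`. -/
def sgProd {α T : Type} [Semigroup T] (g : α → T) (a : α) (l : List α) : T :=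
  l.foldl (fun t x => t * g x) (g a)

/-- The image of a (possibly empty) word under the unique monoid homomorphism
`A^* → T^I` extending the generator map `g : A → T` (the empty word goes to `I`). -/
def wordProd {α T : Type} [Semigroup T] (g : α → T) (l : List α) : WithOne T :=
  (l.map fun x => ((g x : T) : WithOne T)).prod

/-- The word in `(A₁ ∪ A₂)^*` represented by a block: a nonempty `A₁`-word followed by a
nonempty `A₂`-word.  A block is encoded as a pair of (head, tail) pairs, ensuring
nonemptiness of both halves. -/
def blockWord {A₁ A₂ : Type} (b : A₁ × List A₁ × A₂ × List A₂) : List (A₁ ⊕ A₂) :=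
  (b.1 :: b.2.1).map Sum.inl ++ (b.2.2.1 :: b.2.2.2).map Sum.inr

/-- The letter of `(T₁ × T₂)⁺` associated to a block under `μ`, namely
`(ψ₁ w₁, ψ₂ w₂)`. -/
def blockVal {A₁ A₂ T₁ T₂ : Type} [Semigroup T₁] [Semigroup T₂]
    (g₁ : A₁ → T₁) (g₂ : A₂ → T₂) (b : A₁ × List A₁ × A₂ × List A₂) : T₁ × T₂ :=
  (sgProd g₁ b.1 b.2.1, sgProd g₂ b.2.2.1 b.2.2.2)

/-- Partial lift of `c : T₁ × T₂ → T₀` to the adjoined identities, returning `I₀`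
whenever an argument equals the adjoined identity. -/
def clift {T₀ T₁ T₂ : Type} (c : T₁ × T₂ → T₀) (x : WithOne T₁) (y : WithOne T₂) :
    WithOne T₀ :=
  WithOne.recOneCoe 1
    (fun b => WithOne.recOneCoe 1 (fun a => ((c (a, b) : T₀) : WithOne T₀)) x) y

/-- The element `s_{a₁}` of `S = (T₁^I × T₂^I) → T₀^I` associated to a letter `a₁ ∈ A₁`:
`s_{a₁} (t₁, I₂) = I₀` and `s_{a₁} (t₁, t₂) = χ (t₁ ψ₁(a₁), t₂)` for `t₂ ∈ T₂`. -/
def sLetter {A₁ T₀ T₁ T₂ : Type} [Semigroup T₀] [Semigroup T₁] [Semigroup T₂]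
    (g₁ : A₁ → T₁) (c : T₁ × T₂ → T₀) (a : A₁) :
    (WithOne T₁ × WithOne T₂) → WithOne T₀ :=
  fun p => clift c (p.1 * ↑(g₁ a)) p.2

/-- The generator map of the merge homomorphism `ψ_M : A⁺ → T_M`:
`a₁ ↦ (I₂^♭, s_{a₁}, ρ_{ψ₁(a₁)})` for `a₁ ∈ A₁` and `a₂ ↦ (λ_{ψ₂(a₂)}, i₀, I₁^♯)`
for `a₂ ∈ A₂`. -/
def mergeGen {A₁ A₂ T₀ T₁ T₂ : Type} [Semigroup T₀] [Semigroup T₁] [Semigroup T₂]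
    (g₁ : A₁ → T₁) (g₂ : A₂ → T₂) (c : T₁ × T₂ → T₀) :
    A₁ ⊕ A₂ → Triple (mergeData T₀ T₁ T₂)
  | Sum.inl a =>
      ⟨⟨⟨fun _ => 1⟩, Or.inr ⟨1, rfl⟩⟩, sLetter g₁ c a,
        ⟨⟨fun x => x * ↑(g₁ a)⟩, Or.inl ⟨g₁ a, rfl⟩⟩⟩
  | Sum.inr b =>
      ⟨⟨⟨fun x => ↑(g₂ b) * x⟩, Or.inl ⟨g₂ b, rfl⟩⟩, fun _ => 1,
        ⟨⟨fun _ => 1⟩, Or.inr ⟨1, rfl⟩⟩⟩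

section MergeAux

variable {A₁ A₂ T₀ T₁ T₂ : Type} [Semigroup T₀] [Semigroup T₁] [Semigroup T₂]

theorem sgProd_cons {α T : Type} [Semigroup T] (g : α → T) (a b : α) (l : List α) :
    sgProd g a (b :: l) = g a * sgProd g b l := by
  have key : ∀ (l : List α) (x y : T),
      l.foldl (fun t z => t * g z) (x * y) = x * l.foldl (fun t z => t * g z) y := by
    intro l
    induction l with
    | nil => intro x y; rfl
    | cons z l ih => intro x y; simp only [List.foldl_cons, mul_assoc, ih]
  exact key l _ _

theorem wordProd_cons {α T : Type} [Semigroup T] (g : α → T) (a : α) (l : List α) :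
    wordProd g (a :: l) = ↑(g a) * wordProd g l := by
  simp [wordProd]

theorem wordProd_eq_sgProd {α T : Type} [Semigroup T] (g : α → T) (a : α) (l : List α) :
    wordProd g (a :: l) = ↑(sgProd g a l) := by
  induction l generalizing a with
  | nil => simp [wordProd, sgProd]
  | cons b l ih => rw [wordProd_cons, ih, sgProd_cons, WithOne.coe_mul]

/-- Recursive evaluation. -/
def evalF (g₁ : A₁ → T₁) (g₂ : A₂ → T₂) (c : T₁ × T₂ → T₀) :
    List (A₁ ⊕ A₂) → WithOne T₁ → WithOne T₂ × WithOne T₀ × WithOne T₁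
  | [], t => (1, 1, t)
  | Sum.inr b :: w, _ =>
      (↑(g₂ b) * (evalF g₁ g₂ c w 1).1, (evalF g₁ g₂ c w 1).2.1, (evalF g₁ g₂ c w 1).2.2)
  | Sum.inl a :: w, t =>
      (1, clift c (t * ↑(g₁ a)) (evalF g₁ g₂ c w (t * ↑(g₁ a))).1 *
        (evalF g₁ g₂ c w (t * ↑(g₁ a))).2.1, (evalF g₁ g₂ c w (t * ↑(g₁ a))).2.2)

theorem clift_one_right (c : T₁ × T₂ → T₀) (x : WithOne T₁) : clift c x 1 = 1 := rfl

theorem clift_coe (c : T₁ × T₂ → T₀) (x : T₁) (y : T₂) :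
    clift c (x : WithOne T₁) (y : WithOne T₂) = ↑(c (x, y)) := rfl

theorem evalF_fst (g₁ : A₁ → T₁) (g₂ : A₂ → T₂) (c : T₁ × T₂ → T₀)
    (w : List (A₁ ⊕ A₂)) (t t' : WithOne T₁) :
    (evalF g₁ g₂ c w t).1 = (evalF g₁ g₂ c w t').1 := by
  rcases w with _ | ⟨a | b, w⟩ <;> rfl

theorem evalF_sgProd (g₁ : A₁ → T₁) (g₂ : A₂ → T₂) (c : T₁ × T₂ → T₀)
    (l : List (A₁ ⊕ A₂)) (a : A₁ ⊕ A₂) (t : WithOne T₁) :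
    (((sgProd (mergeGen g₁ g₂ c) a l).fst : CompFun (WithOne T₂)).toFun 1,
      (sgProd (mergeGen g₁ g₂ c) a l).snd (t, 1),
      ((sgProd (mergeGen g₁ g₂ c) a l).trd : OpCompFun (WithOne T₁)).toFun t) =
    evalF g₁ g₂ c (a :: l) t := by
  induction l generalizing a t with
  | nil =>
    rcases a with a | b
    · simp [sgProd, mergeGen, evalF, sLetter, clift_one_right]
    · simp [sgProd, mergeGen, evalF]
  | cons b l ih =>
    rw [sgProd_cons]
    have ih := ih b
    generalize sgProd (mergeGen g₁ g₂ c) b l = m at ih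
    rcases a with a | a
    · have h := ih (t * ↑(g₁ a))
      rw [evalF, ← h]
      rfl
    · have h := ih 1
      rw [evalF, ← h]
      refine Prod.ext rfl (Prod.ext ?_ rfl)
      exact one_mul _

theorem evalF_inl (g₁ : A₁ → T₁) (g₂ : A₂ → T₂) (c : T₁ × T₂ → T₀)
    (v : List A₁) (t : WithOne T₁) :
    evalF g₁ g₂ c (v.map Sum.inl) t = (1, 1, t * wordProd g₁ v) := by
  induction v generalizing t with
  | nil => simp [evalF, wordProd]
  | cons a v ih =>
    simp [evalF, ih, clift_one_right, wordProd_cons, mul_assoc]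

theorem evalF_inl_append (g₁ : A₁ → T₁) (g₂ : A₂ → T₂) (c : T₁ × T₂ → T₀)
    (v : List A₁) (a : A₁) (w : List (A₁ ⊕ A₂)) (t : WithOne T₁) :
    evalF g₁ g₂ c ((a :: v).map Sum.inl ++ w) t =
      (1, clift c (t * wordProd g₁ (a :: v)) (evalF g₁ g₂ c w (t * wordProd g₁ (a :: v))).1 *
        (evalF g₁ g₂ c w (t * wordProd g₁ (a :: v))).2.1,
        (evalF g₁ g₂ c w (t * wordProd g₁ (a :: v))).2.2) := by
  induction v generalizing a t with
  | nil => simp [evalF, wordProd]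
  | cons b v ih =>
    rw [List.map_cons, List.cons_append, evalF, ih, wordProd_cons g₁ a]
    simp [clift_one_right, mul_assoc]

theorem evalF_inr_append (g₁ : A₁ → T₁) (g₂ : A₂ → T₂) (c : T₁ × T₂ → T₀)
    (v : List A₂) (w : List (A₁ ⊕ A₂)) :
    evalF g₁ g₂ c (v.map Sum.inr ++ w) 1 =
      (wordProd g₂ v * (evalF g₁ g₂ c w 1).1, (evalF g₁ g₂ c w 1).2.1,
        (evalF g₁ g₂ c w 1).2.2) := by
  induction v with
  | nil => simp [wordProd]
  | cons b v ih => simp [evalF, ih, wordProd_cons, mul_assoc]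

theorem evalF_blocks (g₁ : A₁ → T₁) (g₂ : A₂ → T₂) (c : T₁ × T₂ → T₀)
    (bs : List (A₁ × List A₁ × A₂ × List A₂)) (v₁ : List A₁) :
    evalF g₁ g₂ c ((bs.map blockWord).flatten ++ v₁.map Sum.inl) 1 =
      (1, wordProd c (bs.map (blockVal g₁ g₂)), wordProd g₁ v₁) := by
  induction bs with
  | nil => simp [evalF_inl, wordProd]
  | cons b bs ih =>
    obtain ⟨a, w, b, w'⟩ := b
    have h : ∀ (x : WithOne T₁) (u : List (A₁ ⊕ A₂)),
        evalF g₁ g₂ c ((b :: w').map Sum.inr ++ u) x =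
          evalF g₁ g₂ c ((b :: w').map Sum.inr ++ u) 1 := fun _ _ => rfl
    rw [List.map_cons, List.flatten_cons, blockWord, List.append_assoc, List.append_assoc,
      evalF_inl_append, h, evalF_inr_append, ih, List.map_cons, wordProd_cons c, one_mul,
      mul_one, wordProd_eq_sgProd, wordProd_eq_sgProd, clift_coe]
    rfl

theorem exists_decomp (w : List (A₁ ⊕ A₂)) :
    ∃ (v₂ : List A₂) (bs : List (A₁ × List A₁ × A₂ × List A₂)) (v₁ : List A₁),
      w = v₂.map Sum.inr ++ (bs.map blockWord).flatten ++ v₁.map Sum.inl := by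
  induction w with
  | nil => exact ⟨[], [], [], rfl⟩
  | cons x w ih =>
    obtain ⟨v₂, bs, v₁, rfl⟩ := ih
    rcases x with a | b
    · rcases v₂ with _ | ⟨b, v₂⟩
      · rcases bs with _ | ⟨⟨a', u, b, u'⟩, bs⟩
        · exact ⟨[], [], a :: v₁, by simp⟩
        · exact ⟨[], (a, a' :: u, b, u') :: bs, v₁, by simp [blockWord]⟩
      · exact ⟨[], (a, [], b, v₂) :: bs, v₁, by simp [blockWord]⟩
    · exact ⟨b :: v₂, bs, v₁, by simp⟩

end MergeAux

/-- the merge decomposition.  Let `A = A₁ ⊔ A₂`, let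
`ψ₁ : A₁⁺ → T₁`, `ψ₂ : A₂⁺ → T₂` and `χ : (T₁ × T₂)⁺ → T₀` be semigroup homomorphisms
(determined by their generator maps `g₁`, `g₂`, `c`), let `ψ_M : A⁺ → T_M` be the merge
homomorphism into the merge semigroup `T_M = (T₂^♭, S, T₁^♯)`, and let
`τ : A⁺ → T₂^I × T₀^I × T₁^I` be the map sending `w = v₂ u v₁`
(`v₂ ∈ A₂^*`, `u ∈ (A₁⁺A₂⁺)^*`, `v₁ ∈ A₁^*`) to `(ψ₂ v₂, ψ₀ u, ψ₁ v₁)`.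
Then the map `f (r, s, l) := (r I₂, s (I₁, I₂), l I₁)` satisfies `f ∘ ψ_M = τ`;
in particular there exists `f` with `f ∘ ψ_M = τ`. -/
theorem merge_decomposition
    (A₁ A₂ T₀ T₁ T₂ : Type) [Finite A₁] [Finite A₂]
    [Semigroup T₀] [Semigroup T₁] [Semigroup T₂] [Finite T₀] [Finite T₁] [Finite T₂]
    (g₁ : A₁ → T₁) (g₂ : A₂ → T₂) (c : T₁ × T₂ → T₀)
    (τ : List (A₁ ⊕ A₂) → WithOne T₂ × WithOne T₀ × WithOne T₁)
    (hτ : ∀ (v₂ : List A₂) (bs : List (A₁ × List A₁ × A₂ × List A₂)) (v₁ : List A₁),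
      τ (v₂.map Sum.inr ++ (bs.map blockWord).flatten ++ v₁.map Sum.inl) =
        (wordProd g₂ v₂, wordProd c (bs.map (blockVal g₁ g₂)), wordProd g₁ v₁)) :
    ∃ f : Triple (mergeData T₀ T₁ T₂) → WithOne T₂ × WithOne T₀ × WithOne T₁,
      f = (fun m => ((m.fst : CompFun (WithOne T₂)).toFun 1, m.snd (1, 1),
            (m.trd : OpCompFun (WithOne T₁)).toFun 1)) ∧
      ∀ (a : A₁ ⊕ A₂) (l : List (A₁ ⊕ A₂)),
        f (sgProd (mergeGen g₁ g₂ c) a l) = τ (a :: l) := by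
  refine ⟨_, rfl, fun a l => ?_⟩
  obtain ⟨v₂, bs, v₁, h⟩ := exists_decomp (a :: l)
  refine (evalF_sgProd g₁ g₂ c l a 1).trans ?_
  rw [h, hτ, List.append_assoc, evalF_inr_append, evalF_blocks, mul_one]
end

section
/- Let S be a finite semigroup and let T₁, T₂ be subsemigroups of S such that T₁ ∪ T₂ generates S. Let T₀ := ⟨T₁T₂⟩ be the subsemigroup of S generated by {t₁t₂ : t₁ ∈ T₁, t₂ ∈ T₂}. Then S divides the triple product (T₂^♭, F, T₁^♯), where F is the semigroup of all functions T₁^I × T₂^I → T₀^I under pointwise multiplication, with left action of T₁^♯ given by (l·s)(t₁,t₂) := s(l(t₁), t₂) and right action of T₂^♭ given by (s·r)(t₁,t₂) := s(t₁, r(t₂)). -/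
open Pointwise

/-- A semigroup `S` *divides* a semigroup `T` if `S` is a homomorphic image of a
subsemigroup of `T`. -/
def Divides (S : Type) [Mul S] (T : Type) [Mul T] : Prop :=
  ∃ (U : Subsemigroup T) (f : U →ₙ* S), Function.Surjective f

/-- A semilattice: a commutative semigroup in which every element is idempotent. -/
def IsSemilattice (S : Type) [Mul S] : Prop :=
  (∀ a b : S, a * b = b * a) ∧ ∀ a : S, a * a = a

/-- The data of a two-sided semidirect product `S ⋈ T`: a left action and a right
action of `T` on `S` satisfying the usual axioms. -/
structure BowtieData (S T : Type) [Semigroup S] [Semigroup T] where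
  lact : T → S → S
  ract : S → T → S
  lact_mul : ∀ t s s', lact t (s * s') = lact t s * lact t s'
  mul_ract : ∀ s s' t, ract (s * s') t = ract s t * ract s' t
  mul_lact : ∀ t t' s, lact (t * t') s = lact t (lact t' s)
  ract_mul : ∀ s t t', ract s (t * t') = ract (ract s t) t'
  lact_ract : ∀ t s t', ract (lact t s) t' = lact t (ract s t')

/-- The underlying set of the two-sided semidirect product `S ⋈ T`. -/
structure Bowtie {S T : Type} [Semigroup S] [Semigroup T] (d : BowtieData S T) where
  fst : S
  snd : T

instance {S T : Type} [Semigroup S] [Semigroup T] (d : BowtieData S T) :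
    Mul (Bowtie d) :=
  ⟨fun a b => ⟨d.ract a.fst b.snd * d.lact a.snd b.fst, a.snd * b.snd⟩⟩

theorem Bowtie.mul_def {S T : Type} [Semigroup S] [Semigroup T] {d : BowtieData S T}
    (a b : Bowtie d) :
    a * b = ⟨d.ract a.fst b.snd * d.lact a.snd b.fst, a.snd * b.snd⟩ := rfl

/-- The two-sided semidirect product is a semigroup. -/
instance {S T : Type} [Semigroup S] [Semigroup T] (d : BowtieData S T) :
    Semigroup (Bowtie d) where
  mul_assoc a b c := by
    simp only [Bowtie.mul_def, Bowtie.mk.injEq]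
    exact ⟨by simp only [d.mul_ract, d.mul_lact, d.ract_mul, d.lact_mul, d.lact_ract,
      mul_assoc], mul_assoc _ _ _⟩

instance {S T : Type} [Semigroup S] [Semigroup T] [Finite S] [Finite T]
    (d : BowtieData S T) : Finite (Bowtie d) :=
  Finite.of_surjective (fun p : S × T => Bowtie.mk p.1 p.2) fun b => ⟨(b.fst, b.snd), rfl⟩
section MergeAux

open Classical in
/-- `t` if `y = 1`, else `1`. -/
noncomputable def mrgC {A B : Type} [One A] [One B] (t : A) (y : B) : A := if y = 1 then t else 1

/-- The invariant linking a triple to the element of `S` it represents. -/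
def mrgInv {S : Type} [Semigroup S] (T₀ T₁ T₂ : Subsemigroup S)
    (x : Triple (mergeData ↥T₀ ↥T₁ ↥T₂)) (g : S) : Prop :=
  ∀ (t₁ : WithOne T₁) (t₂ : WithOne T₂),
    WithOne.mapMulHom (MulMemClass.subtype T₂) (x.fst.1.toFun t₂) *
      WithOne.mapMulHom (MulMemClass.subtype T₀) (x.snd (t₁, t₂)) *
      mrgC (WithOne.mapMulHom (MulMemClass.subtype T₁) (x.trd.1.toFun t₁)) t₂ =
    mrgC (WithOne.mapMulHom (MulMemClass.subtype T₁) t₁) (x.fst.1.toFun t₂) * (g : WithOne S) *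
      WithOne.mapMulHom (MulMemClass.subtype T₂) t₂

theorem mrgInv_mul {S : Type} [Semigroup S] (T₀ T₁ T₂ : Subsemigroup S)
    (x x' : Triple (mergeData ↥T₀ ↥T₁ ↥T₂)) (g g' : S) (h : mrgInv T₀ T₁ T₂ x g)
    (h' : mrgInv T₀ T₁ T₂ x' g') : mrgInv T₀ T₁ T₂ (x * x') (g * g') := by
  intro t₁ t₂
  have e1 : (x * x').fst.1.toFun t₂ = x.fst.1.toFun (x'.fst.1.toFun t₂) := rfl
  have e2 : (x * x').snd (t₁, t₂) =
    x.snd (t₁, x'.fst.1.toFun t₂) * x'.snd (x.trd.1.toFun t₁, t₂) := rfl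
  have e3 : (x * x').trd.1.toFun t₁ = x'.trd.1.toFun (x.trd.1.toFun t₁) := rfl
  have k := h t₁ (x'.fst.1.toFun t₂)
  have k' := h' (x.trd.1.toFun t₁) t₂
  rw [e1, e2, e3, map_mul, WithOne.coe_mul]
  generalize x'.fst.1.toFun t₂ = y at *
  by_cases hy : y = 1
  · subst hy
    simp only [mrgC, if_true, map_one, mul_one, one_mul] at k k' ⊢
    simp only [mul_assoc] at k k' ⊢
    rw [k', ← mul_assoc, ← mul_assoc, mul_assoc (WithOne.mapMulHom _ _), k]
    simp only [mul_assoc]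
  · have c : ∀ t : WithOne S, mrgC t y = 1 := fun t => by simp [mrgC, hy]
    rw [c, mul_one] at k
    rw [c, one_mul] at k'
    rw [← mul_assoc, k]
    simp only [mul_assoc] at k' ⊢
    rw [k']

theorem mrgInv_unique {S : Type} [Semigroup S] (T₀ T₁ T₂ : Subsemigroup S)
    (x : Triple (mergeData ↥T₀ ↥T₁ ↥T₂)) (g g' : S) (h : mrgInv T₀ T₁ T₂ x g)
    (h' : mrgInv T₀ T₁ T₂ x g') : g = g' := by
  have k := (h 1 1).symm.trans (h' 1 1)
  simpa [mrgC] using k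

theorem mrgInv_left {S : Type} [Semigroup S] (T₁ T₂ : Subsemigroup S) (a : S) (ha : a ∈ T₁) :
    ∃ x, mrgInv (Subsemigroup.closure ((T₁ : Set S) * (T₂ : Set S))) T₁ T₂ x a := by
  have key : ∀ p : WithOne T₁ × WithOne T₂,
      ∃ z : WithOne (Subsemigroup.closure ((T₁ : Set S) * (T₂ : Set S))),
      WithOne.mapMulHom (MulMemClass.subtype _) z *
        mrgC (WithOne.mapMulHom (MulMemClass.subtype T₁) (p.1 * ((⟨a, ha⟩ : T₁) : WithOne T₁))) p.2
        = WithOne.mapMulHom (MulMemClass.subtype T₁) p.1 * (a : WithOne S) *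
          WithOne.mapMulHom (MulMemClass.subtype T₂) p.2 := by
    rintro ⟨t₁, t₂⟩
    induction t₂ using WithOne.recOneCoe with
    | one => exact ⟨1, by simp [mrgC]⟩
    | coe b =>
      induction t₁ using WithOne.recOneCoe with
      | one =>
        exact ⟨((⟨a * b, Subsemigroup.subset_closure (Set.mul_mem_mul ha b.2)⟩ :
          Subsemigroup.closure ((T₁ : Set S) * (T₂ : Set S))) : WithOne _), by simp [mrgC]⟩
      | coe c =>
        exact ⟨((⟨c * a * b, Subsemigroup.subset_closure
          (Set.mul_mem_mul (T₁.mul_mem c.2 ha) b.2)⟩ :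
          Subsemigroup.closure ((T₁ : Set S) * (T₂ : Set S))) : WithOne _), by simp [mrgC]⟩
  choose z hz using key
  refine ⟨⟨⟨⟨fun _ => 1⟩, Or.inr ⟨1, rfl⟩⟩, z, ⟨⟨fun x => x * ((⟨a, ha⟩ : T₁) : WithOne T₁)⟩,
    Or.inl ⟨⟨a, ha⟩, rfl⟩⟩⟩, fun t₁ t₂ => ?_⟩
  have := hz (t₁, t₂)
  simpa [mrgC] using this

theorem mrgInv_right {S : Type} [Semigroup S] (T₀ T₁ T₂ : Subsemigroup S) (b : S) (hb : b ∈ T₂) :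
    ∃ x, mrgInv T₀ T₁ T₂ x b := by
  refine ⟨⟨⟨⟨fun x => ((⟨b, hb⟩ : T₂) : WithOne T₂) * x⟩, Or.inl ⟨⟨b, hb⟩, rfl⟩⟩, fun _ => 1,
    ⟨⟨fun _ => 1⟩, Or.inr ⟨1, rfl⟩⟩⟩, fun t₁ t₂ => ?_⟩
  have hne : ((⟨b, hb⟩ : T₂) : WithOne T₂) * t₂ ≠ 1 := by
    induction t₂ using WithOne.recOneCoe with
    | one => simp
    | coe c => rw [← WithOne.coe_mul]; exact WithOne.coe_ne_one
  simp [mrgC, hne]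

end MergeAux

/-- If `S` is a finite semigroup generated by the union of two
subsemigroups `T₁`, `T₂`, and `T₀ = ⟨T₁T₂⟩` is the subsemigroup generated by the setwise
product `T₁T₂`, then `S` divides the triple product `(T₂^♭, F, T₁^♯)`, where `F` is the
semigroup of functions `T₁^I × T₂^I → T₀^I` under pointwise product, with the left action
`(l · s)(t₁, t₂) = s (l t₁, t₂)` of `T₁^♯` and the right action
`(s · r)(t₁, t₂) = s (t₁, r t₂)` of `T₂^♭`. -/
theorem divides_merge_triple_product
    (S : Type) [Semigroup S] [Finite S] (T₁ T₂ : Subsemigroup S)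
    (hgen : Subsemigroup.closure ((T₁ : Set S) ∪ (T₂ : Set S)) = ⊤) :
    Divides S
      (Triple (mergeData (↥(Subsemigroup.closure ((T₁ : Set S) * (T₂ : Set S)))) ↥T₁ ↥T₂)) := by
  set T₀ := Subsemigroup.closure ((T₁ : Set S) * (T₂ : Set S)) with hT₀
  let U : Subsemigroup (Triple (mergeData ↥T₀ ↥T₁ ↥T₂)) :=
    { carrier := {x | ∃ g, mrgInv T₀ T₁ T₂ x g}
      mul_mem' := by
        rintro x y ⟨g, hg⟩ ⟨g', hg'⟩
        exact ⟨g * g', mrgInv_mul _ _ _ _ _ _ _ hg hg'⟩ }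
  have hU : ∀ x : U, ∃ g, mrgInv T₀ T₁ T₂ x.1 g := fun x => x.2
  choose f hf using hU
  refine ⟨U, ⟨f, fun x y => mrgInv_unique _ _ _ _ _ _ (hf (x * y))
    (mrgInv_mul _ _ _ _ _ _ _ (hf x) (hf y))⟩, fun g => ?_⟩
  have hg : ∃ x, mrgInv T₀ T₁ T₂ x g := by
    have hmem : g ∈ Subsemigroup.closure ((T₁ : Set S) ∪ (T₂ : Set S)) := by rw [hgen]; trivial
    induction hmem using Subsemigroup.closure_induction with
    | mem a ha =>
      rcases ha with ha | ha
      · exact mrgInv_left T₁ T₂ a ha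
      · exact mrgInv_right T₀ T₁ T₂ a ha
    | mul a b _ _ iha ihb =>
      obtain ⟨x, hx⟩ := iha
      obtain ⟨y, hy⟩ := ihb
      exact ⟨x * y, mrgInv_mul _ _ _ _ _ _ _ hx hy⟩
  obtain ⟨x, hx⟩ := hg
  exact ⟨⟨x, g, hx⟩, mrgInv_unique _ _ _ _ _ _ (hf ⟨x, g, hx⟩) hx⟩
end

section
/- Let m, n ≥ 1, let T₀ ∈ SL^m and T₁, T₂ ∈ SL^n be finite semigroups, and let F be the semigroup of all functions T₁^I × T₂^I → T₀^I under pointwise multiplication. Then for any left action of T₁^♯ on F and any right action of T₂^♭ on F satisfying the triple-product axioms, the triple product (T₂^♭, F, T₁^♯) belongs to SL^{m+n+1}. -/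
open Pointwise

/-- A bundled finite semigroup. -/
structure FinSgr where
  carrier : Type
  str : Semigroup carrier
  fin : Finite carrier

attribute [instance] FinSgr.str FinSgr.fin

/-- The classes `SL^k` of finite semigroups: `SL^1` is the class of finite semilattices,
and `SL^(k+1)` is the class of finite semigroups dividing some two-sided semidirect
product `A ⋈ B` with `A` a finite semilattice and `B ∈ SL^k`.  (`SL^0` is empty.) -/
def SL : ℕ → FinSgr → Prop
  | 0, _ => False
  | 1, T => IsSemilattice T.carrier
  | (k+2), T =>
      ∃ (A B : FinSgr) (d : BowtieData A.carrier B.carrier),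
        IsSemilattice A.carrier ∧ SL (k+1) B ∧ Divides T.carrier (Bowtie d)

/-- Membership of a finite semigroup in the class `SL^k`. -/
def MemSL (k : ℕ) (S : Type) [Semigroup S] [Finite S] : Prop :=
  SL k ⟨S, inferInstance, inferInstance⟩
section helpers

theorem div_of_rel {S T : Type} [Semigroup S] [Semigroup T] (R : S → T → Prop)
    (h1 : ∀ s, ∃ t, R s t) (h2 : ∀ s s' t t', R s t → R s' t' → R (s * s') (t * t'))
    (h3 : ∀ s s' t, R s t → R s' t → s = s') : Divides S T := by
  classical
  let U : Subsemigroup T :=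
    { carrier := {t | ∃ s, R s t}
      mul_mem' := by
        rintro a b ⟨s, hs⟩ ⟨s', hs'⟩
        exact ⟨s * s', h2 _ _ _ _ hs hs'⟩ }
  refine ⟨U, ⟨fun u => Classical.choose u.2, ?_⟩, ?_⟩
  · intro x y
    exact h3 _ _ _ (Classical.choose_spec (x * y).2)
      (h2 _ _ _ _ (Classical.choose_spec x.2) (Classical.choose_spec y.2))
  · intro s
    obtain ⟨t, ht⟩ := h1 s
    exact ⟨⟨t, s, ht⟩, h3 _ _ _ (Classical.choose_spec (⟨s, ht⟩ : ∃ s, R s t)) ht⟩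

theorem rel_of_div {S T : Type} [Semigroup S] [Semigroup T] (h : Divides S T) :
    ∃ R : S → T → Prop, (∀ s, ∃ t, R s t) ∧
      (∀ s s' t t', R s t → R s' t' → R (s * s') (t * t')) ∧
      (∀ s s' t, R s t → R s' t → s = s') := by
  obtain ⟨U, f, hf⟩ := h
  refine ⟨fun s t => ∃ u : U, u.1 = t ∧ f u = s, ?_, ?_, ?_⟩
  · intro s
    obtain ⟨u, hu⟩ := hf s
    exact ⟨u.1, u, rfl, hu⟩
  · rintro _ _ _ _ ⟨u, rfl, rfl⟩ ⟨v, rfl, rfl⟩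
    exact ⟨u * v, rfl, map_mul f u v⟩
  · rintro _ _ _ ⟨u, rfl, rfl⟩ ⟨v, hv, rfl⟩
    rw [Subtype.ext hv]

theorem div_of_inj {S T : Type} [Semigroup S] [Semigroup T] (f : S → T)
    (hm : ∀ a b, f (a * b) = f a * f b) (hi : Function.Injective f) : Divides S T :=
  div_of_rel (fun s t => f s = t) (fun s => ⟨_, rfl⟩)
    (by rintro _ _ _ _ rfl rfl; exact hm _ _) (by rintro _ _ _ rfl h; exact (hi h).symm)

theorem div_trans {S T V : Type} [Semigroup S] [Semigroup T] [Semigroup V]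
    (h : Divides S T) (h' : Divides T V) : Divides S V := by
  obtain ⟨R, a, b, c⟩ := rel_of_div h
  obtain ⟨R', a', b', c'⟩ := rel_of_div h'
  refine div_of_rel (fun s v => ∃ t, R s t ∧ R' t v) ?_ ?_ ?_
  · intro s
    obtain ⟨t, ht⟩ := a s
    obtain ⟨v, hv⟩ := a' t
    exact ⟨v, t, ht, hv⟩
  · rintro _ _ _ _ ⟨t, h1, h2⟩ ⟨t', h1', h2'⟩
    exact ⟨_, b _ _ _ _ h1 h1', b' _ _ _ _ h2 h2'⟩
  · rintro _ _ _ ⟨t, h1, h2⟩ ⟨t', h1', h2'⟩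
    obtain rfl := c' _ _ _ h2 h2'
    exact c _ _ _ h1 h1'

theorem semilattice_div {S T : Type} [Semigroup S] [Semigroup T]
    (h : Divides S T) (hT : IsSemilattice T) : IsSemilattice S := by
  obtain ⟨R, a, b, c⟩ := rel_of_div h
  refine ⟨fun x y => ?_, fun x => ?_⟩
  · obtain ⟨t, ht⟩ := a x
    obtain ⟨u, hu⟩ := a y
    refine c _ _ _ (b _ _ _ _ ht hu) ?_
    rw [hT.1]
    exact b _ _ _ _ hu ht
  · obtain ⟨t, ht⟩ := a x
    have := b _ _ _ _ ht ht
    rw [hT.2] at this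
    exact c _ _ _ this ht

theorem memSL_one {S : Type} [Semigroup S] [Finite S] : MemSL 1 S ↔ IsSemilattice S := by
  simp only [MemSL, SL]

theorem memSL_intro {k : ℕ} {S A B : Type} [Semigroup S] [Finite S] [Semigroup A] [Finite A]
    [Semigroup B] [Finite B] (d : BowtieData A B) (hA : IsSemilattice A)
    (hB : MemSL (k + 1) B) (h : Divides S (Bowtie d)) : MemSL (k + 2) S := by
  simp only [MemSL, SL]
  exact ⟨⟨A, inferInstance, inferInstance⟩, ⟨B, inferInstance, inferInstance⟩, d, hA, hB, h⟩

theorem memSL_elim {k : ℕ} {S : Type} [Semigroup S] [Finite S] (h : MemSL (k + 2) S) :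
    ∃ (A B : Type) (_ : Semigroup A) (_ : Semigroup B) (_ : Finite A) (_ : Finite B)
      (d : BowtieData A B), IsSemilattice A ∧ MemSL (k + 1) B ∧ Divides S (Bowtie d) := by
  simp only [MemSL, SL] at h
  obtain ⟨A, B, d, h1, h2, h3⟩ := h
  exact ⟨A.carrier, B.carrier, A.str, B.str, A.fin, B.fin, d, h1, h2, h3⟩

theorem memSL_div {k : ℕ} {S T : Type} [Semigroup S] [Finite S] [Semigroup T] [Finite T]
    (h : Divides S T) (hT : MemSL (k + 1) T) : MemSL (k + 1) S := by
  cases k with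
  | zero => exact memSL_one.2 (semilattice_div h (memSL_one.1 hT))
  | succ k =>
    obtain ⟨A, B, _, _, _, _, d, h1, h2, h3⟩ := memSL_elim hT
    exact memSL_intro d h1 h2 (div_trans h h3)

theorem memSL_mono {k : ℕ} {S : Type} [Semigroup S] [Finite S]
    (h : MemSL (k + 1) S) : MemSL (k + 2) S := by
  let d : BowtieData Unit S :=
    { lact := fun _ _ => ()
      ract := fun _ _ => ()
      lact_mul := fun _ _ _ => rfl
      mul_ract := fun _ _ _ => rfl
      mul_lact := fun _ _ _ => rfl
      ract_mul := fun _ _ _ => rfl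
      lact_ract := fun _ _ _ => rfl }
  refine memSL_intro d ⟨fun _ _ => rfl, fun _ => rfl⟩ h
    (div_of_inj (fun s => ⟨(), s⟩) (fun _ _ => rfl) ?_)
  intro a b h
  simpa using h

theorem memSL_of_semilattice {k : ℕ} {S : Type} [Semigroup S] [Finite S]
    (h : IsSemilattice S) : MemSL (k + 1) S := by
  induction k with
  | zero => exact memSL_one.2 h
  | succ k ih => exact memSL_mono ih

/-- Extend the actions to `WithOne T` unitally. -/
def extData {S T : Type} [Semigroup S] [Semigroup T] (d : BowtieData S T) :
    BowtieData S (WithOne T) where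
  lact t s := WithOne.recOneCoe (motive := fun _ => S) s (fun t => d.lact t s) t
  ract s t := WithOne.recOneCoe (motive := fun _ => S) s (fun t => d.ract s t) t
  lact_mul t s s' := by
    cases t <;> simp [d.lact_mul]
  mul_ract s s' t := by
    cases t <;> simp [d.mul_ract]
  mul_lact t t' s := by
    cases t <;> cases t' <;>
      simp [← WithOne.coe_mul, d.mul_lact]
  ract_mul s t t' := by
    cases t <;> cases t' <;>
      simp [← WithOne.coe_mul, d.ract_mul]
  lact_ract t s t' := by
    cases t <;> cases t' <;>
      simp [d.lact_ract]

section
variable {S T : Type} [Semigroup S] [Semigroup T] (d : BowtieData S T)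
theorem ext_lact_one (s : S) : (extData d).lact 1 s = s := rfl
theorem ext_ract_one (s : S) : (extData d).ract s 1 = s := rfl
theorem ext_lact_coe (s : S) (t : T) : (extData d).lact t s = d.lact t s := rfl
theorem ext_ract_coe (s : S) (t : T) : (extData d).ract s t = d.ract s t := rfl
end

/-- Extend the actions to `WithOne S`, fixing the new identity. -/
def oneData {S T : Type} [Semigroup S] [Semigroup T] (d : BowtieData S T) :
    BowtieData (WithOne S) T where
  lact t s := WithOne.recOneCoe (motive := fun _ => WithOne S) 1 (fun s => (d.lact t s : S)) s
  ract s t := WithOne.recOneCoe (motive := fun _ => WithOne S) 1 (fun s => (d.ract s t : S)) s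
  lact_mul t s s' := by
    cases s <;> cases s' <;>
      simp [← WithOne.coe_mul, d.lact_mul]
  mul_ract s s' t := by
    cases s <;> cases s' <;>
      simp [← WithOne.coe_mul, d.mul_ract]
  mul_lact t t' s := by
    cases s <;> simp [d.mul_lact]
  ract_mul s t t' := by
    cases s <;> simp [d.ract_mul]
  lact_ract t s t' := by
    cases s <;> simp [d.lact_ract]

theorem semilattice_withOne {S : Type} [Semigroup S] (h : IsSemilattice S) :
    IsSemilattice (WithOne S) := by
  refine ⟨fun a b => ?_, fun a => ?_⟩
  · cases a <;> cases b <;>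
      simp [← WithOne.coe_mul, h.1]
  · cases a <;> simp [← WithOne.coe_mul, h.2]

theorem memSL_withOne {k : ℕ} : ∀ {S : Type} [Semigroup S] [Finite S],
    MemSL (k + 1) S → MemSL (k + 1) (WithOne S) := by
  induction k with
  | zero =>
    intro S _ _ h
    exact memSL_one.2 (semilattice_withOne (memSL_one.1 h))
  | succ k ih =>
    intro S _ _ h
    obtain ⟨A, B, _, _, _, _, d, h1, h2, h3⟩ := memSL_elim h
    obtain ⟨R, a, b, c⟩ := rel_of_div h3
    refine memSL_intro (oneData (extData d)) (semilattice_withOne h1) (ih h2) ?_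
    refine div_of_rel (fun s t => (s = 1 ∧ t = ⟨1, 1⟩) ∨
      ∃ s' t', s = (s' : S) ∧ t = ⟨(t'.fst : A), (t'.snd : B)⟩ ∧ R s' t') ?_ ?_ ?_
    · intro s
      cases s with
      | one => exact ⟨_, Or.inl ⟨rfl, rfl⟩⟩
      | coe s =>
        obtain ⟨t, ht⟩ := a s
        exact ⟨_, Or.inr ⟨s, t, rfl, rfl, ht⟩⟩
    · rintro _ _ _ _ (⟨rfl, rfl⟩ | ⟨s, t, rfl, rfl, h⟩) (⟨rfl, rfl⟩ | ⟨s', t', rfl, rfl, h'⟩)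
      · exact Or.inl ⟨rfl, rfl⟩
      · exact Or.inr ⟨s', t', rfl, rfl, h'⟩
      · exact Or.inr ⟨s, t, rfl, rfl, h⟩
      · exact Or.inr ⟨s * s', t * t', rfl, rfl, b _ _ _ _ h h'⟩
    · rintro _ _ _ (⟨rfl, rfl⟩ | ⟨s, t, rfl, rfl, h⟩) (⟨rfl, h0⟩ | ⟨s', t', rfl, h0, h'⟩)
      · rfl
      · simp at h0
      · simp at h0
      · simp only [Bowtie.mk.injEq, WithOne.coe_inj] at h0
        obtain ⟨e1, e2⟩ := h0
        have : t = t' := by cases t; cases t'; simp_all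
        subst this
        rw [c _ _ _ h h']

theorem memSL_pi {k : ℕ} (Y : Type) [Finite Y] : ∀ {S : Type} [Semigroup S] [Finite S],
    MemSL (k + 1) S → MemSL (k + 1) (Y → S) := by
  induction k with
  | zero =>
    intro S _ _ h
    have h := memSL_one.1 h
    exact memSL_one.2 ⟨fun a b => funext fun y => h.1 _ _, fun a => funext fun y => h.2 _⟩
  | succ k ih =>
    intro S _ _ h
    obtain ⟨A, B, _, _, _, _, d, h1, h2, h3⟩ := memSL_elim h
    obtain ⟨R, a, b, c⟩ := rel_of_div h3
    let d' : BowtieData (Y → A) (Y → B) :=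
      { lact := fun t s y => d.lact (t y) (s y)
        ract := fun s t y => d.ract (s y) (t y)
        lact_mul := fun _ _ _ => funext fun _ => d.lact_mul _ _ _
        mul_ract := fun _ _ _ => funext fun _ => d.mul_ract _ _ _
        mul_lact := fun _ _ _ => funext fun _ => d.mul_lact _ _ _
        ract_mul := fun _ _ _ => funext fun _ => d.ract_mul _ _ _
        lact_ract := fun _ _ _ => funext fun _ => d.lact_ract _ _ _ }
    refine memSL_intro d' ⟨fun a b => funext fun y => h1.1 _ _, fun a => funext fun y => h1.2 _⟩
      (ih h2) (div_of_rel (fun s t => ∀ y, R (s y) ⟨t.fst y, t.snd y⟩) ?_ ?_ ?_)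
    · intro s
      choose t ht using fun y => a (s y)
      exact ⟨⟨fun y => (t y).fst, fun y => (t y).snd⟩, ht⟩
    · intro s s' t t' h h' y
      exact b _ _ _ _ (h y) (h' y)
    · intro s s' t h h'
      exact funext fun y => c _ _ _ (h y) (h' y)

theorem memSL_prod {k : ℕ} : ∀ {S S' : Type} [Semigroup S] [Finite S] [Semigroup S'] [Finite S'],
    MemSL (k + 1) S → MemSL (k + 1) S' → MemSL (k + 1) (S × S') := by
  induction k with
  | zero =>
    intro S S' _ _ _ _ h h'
    have h := memSL_one.1 h
    have h' := memSL_one.1 h'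
    exact memSL_one.2 ⟨fun a b => Prod.ext (h.1 _ _) (h'.1 _ _),
      fun a => Prod.ext (h.2 _) (h'.2 _)⟩
  | succ k ih =>
    intro S S' _ _ _ _ h h'
    obtain ⟨A, B, _, _, _, _, d, h1, h2, h3⟩ := memSL_elim h
    obtain ⟨R, a, b, c⟩ := rel_of_div h3
    obtain ⟨A', B', _, _, _, _, d', h1', h2', h3'⟩ := memSL_elim h'
    obtain ⟨R', a', b', c'⟩ := rel_of_div h3'
    let D : BowtieData (A × A') (B × B') :=
      { lact := fun t s => (d.lact t.1 s.1, d'.lact t.2 s.2)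
        ract := fun s t => (d.ract s.1 t.1, d'.ract s.2 t.2)
        lact_mul := fun _ _ _ => Prod.ext (d.lact_mul _ _ _) (d'.lact_mul _ _ _)
        mul_ract := fun _ _ _ => Prod.ext (d.mul_ract _ _ _) (d'.mul_ract _ _ _)
        mul_lact := fun _ _ _ => Prod.ext (d.mul_lact _ _ _) (d'.mul_lact _ _ _)
        ract_mul := fun _ _ _ => Prod.ext (d.ract_mul _ _ _) (d'.ract_mul _ _ _)
        lact_ract := fun _ _ _ => Prod.ext (d.lact_ract _ _ _) (d'.lact_ract _ _ _) }
    refine memSL_intro D ⟨fun a b => Prod.ext (h1.1 _ _) (h1'.1 _ _),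
      fun a => Prod.ext (h1.2 _) (h1'.2 _)⟩ (ih h2 h2')
      (div_of_rel (fun s t => R s.1 ⟨t.fst.1, t.snd.1⟩ ∧ R' s.2 ⟨t.fst.2, t.snd.2⟩) ?_ ?_ ?_)
    · intro s
      obtain ⟨t, ht⟩ := a s.1
      obtain ⟨t', ht'⟩ := a' s.2
      exact ⟨⟨(t.fst, t'.fst), (t.snd, t'.snd)⟩, ht, ht'⟩
    · rintro s s' t t' ⟨h, h'⟩ ⟨g, g'⟩
      exact ⟨b _ _ _ _ h g, b' _ _ _ _ h' g'⟩
    · rintro s s' t ⟨h, h'⟩ ⟨g, g'⟩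
      exact Prod.ext (c _ _ _ h g) (c' _ _ _ h' g')

/-- The canonical block product actions. -/
def blockData (S M : Type) [Semigroup S] [Monoid M] : BowtieData (M × M → S) M where
  lact t f x := f (x.1 * t, x.2)
  ract f t x := f (x.1, t * x.2)
  lact_mul _ _ _ := rfl
  mul_ract _ _ _ := rfl
  mul_lact t t' f := by funext x; simp [mul_assoc]
  ract_mul f t t' := by funext x; simp [mul_assoc]
  lact_ract _ _ _ := rfl

instance blockMonoid (S M : Type) [Monoid S] [Monoid M] : Monoid (Bowtie (blockData S M)) :=
  { (inferInstance : Semigroup (Bowtie (blockData S M))) with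
    one := ⟨1, 1⟩
    one_mul := by
      rintro ⟨f, m⟩
      change (⟨(fun x => 1 * f (x.1 * 1, x.2)), 1 * m⟩ : Bowtie (blockData S M)) = _
      simp
    mul_one := by
      rintro ⟨f, m⟩
      change (⟨(fun x => f (x.1, 1 * x.2) * 1), m * 1⟩ : Bowtie (blockData S M)) = _
      simp }

theorem block_one_fst (S M : Type) [Monoid S] [Monoid M] (x : M × M) :
    (1 : Bowtie (blockData S M)).fst x = 1 := rfl

theorem block_one_snd (S M : Type) [Monoid S] [Monoid M] :
    (1 : Bowtie (blockData S M)).snd = 1 := rfl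

theorem memSL_bowtie {m p : ℕ} : ∀ {S B : Type} [Semigroup S] [Finite S] [Semigroup B] [Finite B]
    (d : BowtieData S B), MemSL (m + 1) S → MemSL (p + 1) B →
    MemSL (m + p + 2) (Bowtie d) := by
  induction m with
  | zero =>
    intro S B _ _ _ _ d h h'
    rw [Nat.zero_add]
    exact memSL_intro d (memSL_one.1 h) h' (div_of_inj id (fun _ _ => rfl) fun _ _ h => h)
  | succ m ih =>
    intro S B _ _ _ _ d h h'
    obtain ⟨A, C, _, _, _, _, dAC, h1, h2, h3⟩ := memSL_elim h
    obtain ⟨R, ra, rb, rc⟩ := rel_of_div h3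
    have hD : MemSL (m + p + 2) (Bowtie (blockData (WithOne C) (WithOne B))) :=
      ih _ (memSL_pi _ (memSL_withOne h2)) (memSL_withOne h')
    have e : m + 1 + p + 2 = (m + p + 1) + 2 := by omega
    rw [e]
    let X := WithOne B × WithOne B
    let D := Bowtie (blockData (WithOne C) (WithOne B))
    refine memSL_intro (A := D × D → X → A) (B := D) (blockData (X → A) D) ?_ hD ?_
    · exact ⟨fun a b => funext fun y => funext fun x => h1.1 _ _,
        fun a => funext fun y => funext fun x => h1.2 _⟩
    let E := extData dAC
    let G := extData d
    refine div_of_rel (fun s t => t.snd.snd = (s.snd : B) ∧ ∃ (a : X → A) (c : X → C),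
      t.snd.fst = (fun x => (c x : WithOne C)) ∧
      t.fst = (fun y x => E.ract (E.lact (y.1.fst (x.1, s.snd * (y.2.snd * x.2)))
        (a (x.1 * y.1.snd, y.2.snd * x.2))) (y.2.fst (x.1 * y.1.snd * s.snd, x.2))) ∧
      ∀ x, R (G.ract (G.lact x.1 s.fst) x.2) ⟨a x, c x⟩) ?_ ?_ ?_
    · rintro ⟨s, b⟩
      choose t ht using fun x : X => ra (G.ract (G.lact x.1 s) x.2)
      exact ⟨⟨_, ⟨_, _⟩⟩, rfl, fun x => (t x).fst, fun x => (t x).snd, rfl, rfl, ht⟩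
    · rintro ⟨s, b⟩ ⟨s', b'⟩ ⟨_, ⟨_, _⟩⟩ ⟨_, ⟨_, _⟩⟩ ⟨h1, a, c, h2, h3, h4⟩ ⟨h1', a', c', h2', h3', h4'⟩
      simp only at h1 h2 h3 h4 h1' h2' h3' h4'
      subst h1 h2 h3 h1' h2' h3'
      refine ⟨rfl, fun x => dAC.ract (a (x.1, b' * x.2)) (c' (x.1 * b, x.2)) *
        dAC.lact (c (x.1, b' * x.2)) (a' (x.1 * b, x.2)),
        fun x => c (x.1, b' * x.2) * c' (x.1 * b, x.2), rfl, ?_, ?_⟩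
      · funext y x
        obtain ⟨⟨c1, b1⟩, ⟨c2, b2⟩⟩ := y
        change E.ract (E.lact (c1 (x.1, b * (b' * b2 * x.2))) (a (x.1 * b1, b' * b2 * x.2)))
            (c' (x.1 * b1 * b, b2 * x.2) * c2 (x.1 * b1 * b * b', x.2)) *
          E.ract (E.lact (c1 (x.1, b * (b' * (b2 * x.2))) * c (x.1 * b1, b' * (b2 * x.2)))
            (a' (x.1 * (b1 * b), b2 * x.2))) (c2 (x.1 * (b1 * b) * b', x.2)) =
          E.ract (E.lact (c1 (x.1, b * b' * (b2 * x.2)))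
            (E.ract (a (x.1 * b1, b' * (b2 * x.2))) (c' (x.1 * b1 * b, b2 * x.2)) *
              E.lact (c (x.1 * b1, b' * (b2 * x.2))) (a' (x.1 * b1 * b, b2 * x.2))))
            (c2 (x.1 * b1 * (b * b'), x.2))
        simp only [E.lact_mul, E.mul_ract, E.mul_lact, E.ract_mul, mul_assoc, E.lact_ract]
      · intro x
        have := rb _ _ _ _ (h4 (x.1, b' * x.2)) (h4' (x.1 * b, x.2))
        have e1 : G.ract (G.lact x.1 (G.ract s b' * G.lact b s')) x.2 =
            G.ract (G.lact x.1 s) (b' * x.2) * G.ract (G.lact (x.1 * b) s') x.2 := by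
          simp only [G.lact_mul, G.mul_ract, G.ract_mul, G.mul_lact, G.lact_ract]
        change R (G.ract (G.lact x.1 (G.ract s b' * G.lact b s')) x.2) _
        rw [e1]
        exact this
    · rintro ⟨s, b⟩ ⟨s', b'⟩ ⟨_, ⟨_, _⟩⟩ ⟨h1, a, c, h2, h3, h4⟩ ⟨h1', a', c', h2', h3', h4'⟩
      simp only at h1 h2 h3 h4 h1' h2' h3' h4'
      subst h1 h2 h3
      obtain rfl := WithOne.coe_inj.1 h1'
      have ec : c (1, 1) = c' (1, 1) := WithOne.coe_inj.1 (congrFun h2' (1, 1))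
      have ea := congrFun (congrFun h3' (1, 1)) (1, 1)
      have ea : a (1, 1) = a' (1, 1) := by
        simpa [block_one_fst, block_one_snd, E, ext_lact_one, ext_ract_one] using ea
      have := h4 (1, 1)
      rw [ec, ea] at this
      rw [show s = s' from rc _ _ _ this (h4' (1, 1))]

/-- Sets under union. -/
structure USet (α : Type) where
  carrier : Set α

instance (α : Type) : Semigroup (USet α) where
  mul a b := ⟨a.carrier ∪ b.carrier⟩
  mul_assoc a b c := congrArg USet.mk (Set.union_assoc _ _ _)

theorem USet.mul_def {α : Type} (a b : USet α) : a * b = ⟨a.carrier ∪ b.carrier⟩ := rfl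

instance (α : Type) [Finite α] : Finite (USet α) :=
  Finite.of_surjective (fun s : Set α => USet.mk s) fun f => ⟨f.carrier, rfl⟩

theorem USet.semilattice (α : Type) : IsSemilattice (USet α) :=
  ⟨fun _ _ => congrArg USet.mk (Set.union_comm _ _), fun _ => congrArg USet.mk (Set.union_self _)⟩

theorem flag_mul (a b : WithOne Unit) : a * b = 1 ↔ a = 1 ∧ b = 1 := by
  cases a <;> cases b <;> simp [← WithOne.coe_mul]

theorem memSL_aux {k : ℕ} {T : Type} [Semigroup T] [Finite T] (h : MemSL (k + 1) T) :
    MemSL (k + 1) (WithOne T × WithOne Unit) :=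
  memSL_prod (memSL_withOne h) (memSL_of_semilattice
    (semilattice_withOne ⟨fun _ _ => rfl, fun _ => rfl⟩))

def sharpData (T : Type) [Semigroup T] :
    BowtieData (USet (WithOne T)) (WithOne T × WithOne Unit) where
  lact _ s := s
  ract s t := ⟨{y | t.2 = 1 ∧ ∃ x ∈ s.carrier, y = x * t.1}⟩
  lact_mul _ _ _ := rfl
  mul_ract s s' t := by
    refine congrArg USet.mk (Set.ext fun y => ?_)
    simp only [USet.mul_def, Set.mem_union, Set.mem_ofPred_eq]
    grind
  mul_lact _ _ _ := rfl
  ract_mul s t t' := by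
    refine congrArg USet.mk (Set.ext fun y => ?_)
    simp only [Set.mem_ofPred_eq, Prod.snd_mul, Prod.fst_mul, flag_mul]
    constructor
    · rintro ⟨⟨h, h'⟩, x, hx, rfl⟩
      exact ⟨h', x * t.1, ⟨h, x, hx, rfl⟩, (mul_assoc _ _ _).symm⟩
    · rintro ⟨h', _, ⟨h, x, hx, rfl⟩, rfl⟩
      exact ⟨⟨h, h'⟩, x, hx, mul_assoc _ _ _⟩
  lact_ract _ _ _ := rfl

def flatData (T : Type) [Semigroup T] :
    BowtieData (USet (WithOne T)) (WithOne T × WithOne Unit) where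
  ract s _ := s
  lact t s := ⟨{y | t.2 = 1 ∧ ∃ x ∈ s.carrier, y = t.1 * x}⟩
  mul_ract _ _ _ := rfl
  lact_mul t s s' := by
    refine congrArg USet.mk (Set.ext fun y => ?_)
    simp only [USet.mul_def, Set.mem_union, Set.mem_ofPred_eq]
    grind
  ract_mul _ _ _ := rfl
  mul_lact t t' s := by
    refine congrArg USet.mk (Set.ext fun y => ?_)
    simp only [Set.mem_ofPred_eq, Prod.snd_mul, Prod.fst_mul, flag_mul]
    constructor
    · rintro ⟨⟨h, h'⟩, x, hx, rfl⟩
      exact ⟨h, t'.1 * x, ⟨h', x, hx, rfl⟩, mul_assoc _ _ _⟩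
    · rintro ⟨h', _, ⟨h, x, hx, rfl⟩, rfl⟩
      exact ⟨⟨h', h⟩, x, hx, (mul_assoc _ _ _).symm⟩
  lact_ract _ _ _ := rfl

theorem memSL_sharp {k : ℕ} {T : Type} [Semigroup T] [Finite T] (h : MemSL (k + 1) T) :
    MemSL (k + 2) (Sharp T) := by
  refine memSL_intro (sharpData T) (USet.semilattice _) (memSL_aux h) ?_
  refine div_of_rel (fun s t =>
    (∃ a : T, s.1.toFun = (fun x => x * (a : WithOne T)) ∧ t = ⟨⟨∅⟩, (a, 1)⟩) ∨
    (∃ (c b : WithOne T), s.1.toFun = (fun _ => c) ∧ t = ⟨⟨{c}⟩, (b, ((() : Unit) : WithOne Unit))⟩))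
    ?_ ?_ ?_
  · rintro ⟨s, ⟨a, hs⟩ | ⟨c, hs⟩⟩
    · exact ⟨_, Or.inl ⟨a, hs, rfl⟩⟩
    · exact ⟨_, Or.inr ⟨c, 1, hs, rfl⟩⟩
  · rintro s s' _ _ (⟨a, hs, rfl⟩ | ⟨c, b, hs, rfl⟩) (⟨a', hs', rfl⟩ | ⟨c', b', hs', rfl⟩)
    · refine Or.inl ⟨a * a', ?_, ?_⟩
      · funext x
        change s'.1.toFun (s.1.toFun x) = _
        simp [hs, hs', mul_assoc]
      · rw [Bowtie.mul_def]
        simp [sharpData, USet.mul_def]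
    · refine Or.inr ⟨c', a * b', ?_, ?_⟩
      · funext x
        change s'.1.toFun (s.1.toFun x) = _
        simp [hs']
      · rw [Bowtie.mul_def]
        simp [sharpData, USet.mul_def]
    · refine Or.inr ⟨c * a', b * a', ?_, ?_⟩
      · funext x
        change s'.1.toFun (s.1.toFun x) = _
        simp [hs, hs']
      · rw [Bowtie.mul_def]
        simp [sharpData, USet.mul_def]
    · refine Or.inr ⟨c', b * b', ?_, ?_⟩
      · funext x
        change s'.1.toFun (s.1.toFun x) = _
        simp [hs']
      · rw [Bowtie.mul_def]
        simp [sharpData, USet.mul_def, ← WithOne.coe_mul]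
  · rintro ⟨⟨s⟩, hm⟩ ⟨⟨s'⟩, hm'⟩ _ (⟨a, hs, rfl⟩ | ⟨c, b, hs, rfl⟩)
      (⟨a', hs', h⟩ | ⟨c', b', hs', h⟩) <;> simp_all

theorem memSL_flat {k : ℕ} {T : Type} [Semigroup T] [Finite T] (h : MemSL (k + 1) T) :
    MemSL (k + 2) (Flat T) := by
  refine memSL_intro (flatData T) (USet.semilattice _) (memSL_aux h) ?_
  refine div_of_rel (fun s t =>
    (∃ a : T, s.1.toFun = (fun x => (a : WithOne T) * x) ∧ t = ⟨⟨∅⟩, (a, 1)⟩) ∨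
    (∃ (c b : WithOne T), s.1.toFun = (fun _ => c) ∧ t = ⟨⟨{c}⟩, (b, ((() : Unit) : WithOne Unit))⟩))
    ?_ ?_ ?_
  · rintro ⟨s, ⟨a, hs⟩ | ⟨c, hs⟩⟩
    · exact ⟨_, Or.inl ⟨a, hs, rfl⟩⟩
    · exact ⟨_, Or.inr ⟨c, 1, hs, rfl⟩⟩
  · rintro s s' _ _ (⟨a, hs, rfl⟩ | ⟨c, b, hs, rfl⟩) (⟨a', hs', rfl⟩ | ⟨c', b', hs', rfl⟩)
    · refine Or.inl ⟨a * a', ?_, ?_⟩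
      · funext x
        change s.1.toFun (s'.1.toFun x) = _
        simp [hs, hs', mul_assoc]
      · rw [Bowtie.mul_def]
        simp [flatData, USet.mul_def]
    · refine Or.inr ⟨a * c', a * b', ?_, ?_⟩
      · funext x
        change s.1.toFun (s'.1.toFun x) = _
        simp [hs, hs']
      · rw [Bowtie.mul_def]
        simp [flatData, USet.mul_def]
    · refine Or.inr ⟨c, b * a', ?_, ?_⟩
      · funext x
        change s.1.toFun (s'.1.toFun x) = _
        simp [hs]
      · rw [Bowtie.mul_def]
        simp [flatData, USet.mul_def]
    · refine Or.inr ⟨c, b * b', ?_, ?_⟩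
      · funext x
        change s.1.toFun (s'.1.toFun x) = _
        simp [hs]
      · rw [Bowtie.mul_def]
        simp [flatData, USet.mul_def, ← WithOne.coe_mul]
  · rintro ⟨⟨s⟩, hm⟩ ⟨⟨s'⟩, hm'⟩ _ (⟨a, hs, rfl⟩ | ⟨c, b, hs, rfl⟩)
      (⟨a', hs', h⟩ | ⟨c', b', hs', h⟩) <;> simp_all

end helpers

/-- Let `m, n ≥ 1`, let `T₀ ∈ SL^m` and `T₁, T₂ ∈ SL^n` be finite
semigroups, and let `F` be the semigroup of all functions `T₁^I × T₂^I → T₀^I` under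
pointwise product.  Then for any left action of `T₁^♯` and right action of `T₂^♭` on `F`
satisfying the triple-product axioms, the triple product `(T₂^♭, F, T₁^♯)` lies in
`SL^(m+n+1)`. -/
theorem merge_triple_product_mem_SL
    (m n : ℕ) (hm : 1 ≤ m) (hn : 1 ≤ n)
    (T₀ T₁ T₂ : Type) [Semigroup T₀] [Semigroup T₁] [Semigroup T₂]
    [Finite T₀] [Finite T₁] [Finite T₂]
    (h0 : MemSL m T₀) (h1 : MemSL n T₁) (h2 : MemSL n T₂)
    (td : TripleData (↥(Flat T₂)) ((WithOne T₁ × WithOne T₂) → WithOne T₀) (↥(Sharp T₁))) :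
    MemSL (m + n + 1) (Triple td) := by
  obtain ⟨m, rfl⟩ := Nat.exists_eq_add_of_le' hm
  obtain ⟨n, rfl⟩ := Nat.exists_eq_add_of_le' hn
  let F := (WithOne T₁ × WithOne T₂) → WithOne T₀
  let d : BowtieData F (Flat T₂ × Sharp T₁) :=
    { lact := fun t s => td.lact t.2 s
      ract := fun s t => td.ract s t.1
      lact_mul := fun _ _ _ => td.lact_mul _ _ _
      mul_ract := fun _ _ _ => td.mul_ract _ _ _
      mul_lact := fun _ _ _ => td.mul_lact _ _ _
      ract_mul := fun _ _ _ => td.ract_mul _ _ _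
      lact_ract := fun _ _ _ => td.lact_ract _ _ _ }
  have key : MemSL (m + (n + 1) + 2) (Bowtie d) :=
    memSL_bowtie d (memSL_pi _ (memSL_withOne h0)) (memSL_prod (memSL_flat h2) (memSL_sharp h1))
  have e : m + 1 + (n + 1) + 1 = m + (n + 1) + 1 + 1 := by omega
  rw [e]
  refine memSL_div (div_of_inj (fun x => ⟨x.snd, (x.fst, x.trd)⟩) (fun _ _ => rfl) ?_) key
  rintro ⟨a, b, c⟩ ⟨a', b', c'⟩ h
  simp only [Bowtie.mk.injEq, Prod.mk.injEq] at h
  obtain ⟨rfl, rfl, rfl⟩ := h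
  rfl
end

section
/- For all m, n ≥ 1: if a finite semigroup U divides a two-sided semidirect product A ⋈ B with A ∈ SL^m and B ∈ SL^n, then U ∈ SL^{m+n}. -/
open Pointwise

theorem divides_of_rel {S T : Type} [Semigroup S] [Semigroup T] (R : T → S → Prop)
    (hmul : ∀ t s t' s', R t s → R t' s' → R (t * t') (s * s'))
    (hfun : ∀ t s s', R t s → R t s' → s = s')
    (hsurj : ∀ s, ∃ t, R t s) : Divides S T := by
  classical
  let V : Subsemigroup T :=
    { carrier := {t | ∃ s, R t s}
      mul_mem' := by
        rintro a b ⟨s, hs⟩ ⟨s', hs'⟩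
        exact ⟨_, hmul _ _ _ _ hs hs'⟩ }
  have hV : ∀ t : V, R t.1 (Classical.choose t.2) := fun t => Classical.choose_spec t.2
  refine ⟨V, ⟨fun t => Classical.choose t.2, ?_⟩, ?_⟩
  · intro x y
    exact hfun _ _ _ (hV (x * y)) (hmul _ _ _ _ (hV x) (hV y))
  · intro s
    obtain ⟨t, ht⟩ := hsurj s
    exact ⟨⟨t, s, ht⟩, hfun _ _ _ (hV ⟨t, s, ht⟩) ht⟩

theorem Divides.rel {S T : Type} [Semigroup S] [Semigroup T] (h : Divides S T) :
    ∃ R : T → S → Prop,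
      (∀ t s t' s', R t s → R t' s' → R (t * t') (s * s')) ∧
      (∀ t s s', R t s → R t s' → s = s') ∧ (∀ s, ∃ t, R t s) := by
  obtain ⟨V, f, hf⟩ := h
  refine ⟨fun t s => ∃ h : t ∈ V, f ⟨t, h⟩ = s, ?_, ?_, ?_⟩
  · rintro t s t' s' ⟨h, rfl⟩ ⟨h', rfl⟩
    exact ⟨V.mul_mem h h', by rw [← map_mul]; rfl⟩
  · rintro t s s' ⟨h, rfl⟩ ⟨h', rfl⟩
    rfl
  · intro s
    obtain ⟨t, ht⟩ := hf s
    exact ⟨t.1, t.2, ht⟩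

theorem Divides.trans' {S T W : Type} [Semigroup S] [Semigroup T] [Semigroup W]
    (h : Divides S T) (h' : Divides T W) : Divides S W := by
  obtain ⟨R, m, f, s⟩ := h.rel
  obtain ⟨R', m', f', s'⟩ := h'.rel
  refine divides_of_rel (fun w x => ∃ t, R' w t ∧ R t x) ?_ ?_ ?_
  · rintro t x t' x' ⟨y, h1, h2⟩ ⟨y', h1', h2'⟩
    exact ⟨y * y', m' _ _ _ _ h1 h1', m _ _ _ _ h2 h2'⟩
  · rintro t x x' ⟨y, h1, h2⟩ ⟨y', h1', h2'⟩
    obtain rfl := f' _ _ _ h1 h1'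
    exact f _ _ _ h2 h2'
  · intro x
    obtain ⟨t, ht⟩ := s x
    obtain ⟨w, hw⟩ := s' t
    exact ⟨w, t, hw, ht⟩

/-- Pointwise power of a two-sided action. -/
def BowtieData.pow {S T : Type} [Semigroup S] [Semigroup T] (d : BowtieData S T) (X : Type) :
    BowtieData (X → S) (X → T) where
  lact t s := fun x => d.lact (t x) (s x)
  ract s t := fun x => d.ract (s x) (t x)
  lact_mul t s s' := funext fun x => d.lact_mul _ _ _
  mul_ract t s s' := funext fun x => d.mul_ract _ _ _
  mul_lact t s s' := funext fun x => d.mul_lact _ _ _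
  ract_mul t s s' := funext fun x => d.ract_mul _ _ _
  lact_ract t s s' := funext fun x => d.lact_ract _ _ _

theorem SL_pow (X : Type) [Finite X] : ∀ (k : ℕ) (D : FinSgr), SL k D →
    SL k ⟨X → D.carrier, inferInstance, inferInstance⟩
  | 0, _, h => h
  | 1, D, h => ⟨fun a b => funext fun x => h.1 _ _, fun a => funext fun x => h.2 _⟩
  | (k+2), D, h => by
    obtain ⟨A, B, d, hA, hB, hd⟩ := h
    refine ⟨⟨X → A.carrier, inferInstance, inferInstance⟩,
      ⟨X → B.carrier, inferInstance, inferInstance⟩, d.pow X,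
      ⟨fun a b => funext fun x => hA.1 _ _, fun a => funext fun x => hA.2 _⟩,
      SL_pow X (k+1) B hB, ?_⟩
    obtain ⟨R, m, f, s⟩ := hd.rel
    refine divides_of_rel (T := Bowtie (d.pow X)) (S := X → D.carrier)
      (fun t u => ∀ x, R ⟨t.fst x, t.snd x⟩ (u x)) ?_ ?_ ?_
    · intro t u t' u' h h' x
      exact m _ _ _ _ (h x) (h' x)
    · intro t u u' h h'
      exact funext fun x => f _ _ _ (h x) (h' x)
    · intro u
      choose t ht using fun x => s (u x)
      exact ⟨⟨fun x => (t x).fst, fun x => (t x).snd⟩, ht⟩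

/-- Extend the action to `WithOne T`. -/
def BowtieData.extend {S T : Type} [Semigroup S] [Semigroup T] (d : BowtieData S T) :
    BowtieData S (WithOne T) where
  lact t s := WithOne.recOneCoe s (fun t => d.lact t s) t
  ract s t := WithOne.recOneCoe s (fun t => d.ract s t) t
  lact_mul t s s' := by
    cases t with
    | one => rfl
    | coe t => exact d.lact_mul _ _ _
  mul_ract s s' t := by
    cases t with
    | one => rfl
    | coe t => exact d.mul_ract _ _ _
  mul_lact t t' s := by
    cases t with
    | one => rw [one_mul]; rfl
    | coe t => cases t' with
      | one => rw [mul_one]; rfl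
      | coe t' => rw [← WithOne.coe_mul]; exact d.mul_lact _ _ _
  ract_mul s t t' := by
    cases t with
    | one => rw [one_mul]; rfl
    | coe t => cases t' with
      | one => rw [mul_one]; rfl
      | coe t' => rw [← WithOne.coe_mul]; exact d.ract_mul _ _ _
  lact_ract t s t' := by
    cases t with
    | one => rfl
    | coe t => cases t' with
      | one => rfl
      | coe t' => exact d.lact_ract _ _ _

/-- The block-product action by translating indices. -/
def shiftData {B N : Type} [Semigroup B] [Semigroup N] (φ : B →ₙ* N)
    (E : Type) [Semigroup E] : BowtieData (N → N → E) B where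
  lact b f := fun x y => f (x * φ b) y
  ract f b := fun x y => f x (φ b * y)
  lact_mul _ _ _ := rfl
  mul_ract _ _ _ := rfl
  mul_lact t t' s := by funext x y; simp only [map_mul, mul_assoc]
  ract_mul t t' s := by funext x y; simp only [map_mul, mul_assoc]
  lact_ract _ _ _ := rfl

/-- Coercion to `WithOne`. -/
def oneCoe (B : Type) [Semigroup B] : B →ₙ* WithOne B := ⟨fun b => (b : WithOne B), fun _ _ => rfl⟩

abbrev MM (D B : Type) [Semigroup D] [Semigroup B] := Bowtie (shiftData (oneCoe B) D)

abbrev PP (D B : Type) [Semigroup D] [Semigroup B] :=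
  Bowtie (shiftData (MulHom.id (WithOne B)) (WithOne D))

def psi (D B : Type) [Semigroup D] [Semigroup B] : MM D B →ₙ* PP D B :=
  ⟨fun m => ⟨fun x y => (m.fst x y : WithOne D), (m.snd : WithOne B)⟩, fun _ _ => rfl⟩

instance finWithOne (B : Type) [Finite B] : Finite (WithOne B) :=
  inferInstanceAs (Finite (Option B))

theorem main_div {A B C D : Type} [Semigroup A] [Semigroup B] [Semigroup C] [Semigroup D]
    (d : BowtieData A B) (e : BowtieData C D) (h : Divides A (Bowtie e)) :
    Divides (Bowtie d) (Bowtie (shiftData (psi D B) C)) := by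
  obtain ⟨R, m, f, s⟩ := h.rel
  refine divides_of_rel (fun t u => t.snd.snd = u.snd ∧
    ∃ c : WithOne B → WithOne B → C,
      (∀ x y, R ⟨c x y, t.snd.fst x y⟩ (d.extend.ract (d.extend.lact x u.fst) y)) ∧
      ∀ p q : PP D B, t.fst p q = e.extend.lact (p.fst 1 (t.snd.snd * q.snd))
        (e.extend.ract (c p.snd q.snd) (q.fst (p.snd * t.snd.snd) 1))) ?_ ?_ ?_
  · rintro ⟨F, g, b⟩ ⟨a, b0⟩ ⟨F', g', b'⟩ ⟨a', b0'⟩ ⟨hb, c, hc, hF⟩ ⟨hb', c', hc', hF'⟩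
    dsimp only at hb hb' hc hc' hF hF'
    subst hb hb'
    refine ⟨rfl, fun x y => e.ract (c x (b' * y)) (g' (x * b) y) *
      e.lact (g x (b' * y)) (c' (x * b) y), ?_, ?_⟩
    · intro x y
      have := m _ _ _ _ (hc x (b' * y)) (hc' (x * b) y)
      have key : d.extend.ract (d.extend.lact x (d.ract a b' * d.lact b a')) y =
          d.extend.ract (d.extend.lact x a) (b' * y) *
            d.extend.ract (d.extend.lact (x * b) a') y := by
        rw [d.extend.lact_mul, d.extend.mul_ract, d.extend.ract_mul, d.extend.mul_lact,
          d.extend.lact_ract x a]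
        rfl
      simp only [Bowtie.mul_def] at this ⊢
      rw [key]
      exact this
    · rintro ⟨p, x⟩ ⟨q, y⟩
      have h1 := hF ⟨p, x⟩ (psi D B ⟨g', b'⟩ * ⟨q, y⟩)
      have h2 := hF' (⟨p, x⟩ * psi D B ⟨g, b⟩) ⟨q, y⟩
      have k1 : ∀ z w, e.ract z w = e.extend.ract z (w : WithOne D) := fun _ _ => rfl
      have k2 : ∀ z w, e.lact z w = e.extend.lact (z : WithOne D) w := fun _ _ => rfl
      have h1' : F ⟨p, x⟩ (psi D B ⟨g', b'⟩ * ⟨q, y⟩) =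
        e.extend.lact (p 1 (b * (b' * y))) (e.extend.ract (c x (b' * y))
          ((g' (x * b) (y * 1) : WithOne D) * q (x * b * b') 1)) := h1
      have h2' : F' (⟨p, x⟩ * psi D B ⟨g, b⟩) ⟨q, y⟩ =
        e.extend.lact (p 1 (b * (b' * y)) * (g (1 * x) (b' * y) : WithOne D))
          (e.extend.ract (c' (x * b) y) (q (x * b * b') 1)) := h2
      change F ⟨p, x⟩ (psi D B ⟨g', b'⟩ * ⟨q, y⟩) * F' (⟨p, x⟩ * psi D B ⟨g, b⟩) ⟨q, y⟩ =
        e.extend.lact (p 1 ((b * b' : WithOne B) * y)) (e.extend.ract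
          (e.ract (c x (b' * y)) (g' (x * b) y) * e.lact (g x (b' * y)) (c' (x * b) y))
          (q (x * (b * b' : WithOne B)) 1))
      rw [h1', h2']
      simp only [k1, k2, e.extend.lact_mul, e.extend.mul_ract, e.extend.ract_mul,
        e.extend.mul_lact, e.extend.lact_ract, mul_assoc, one_mul, mul_one]
  · rintro ⟨F, g, b⟩ ⟨a, b0⟩ ⟨a', b0'⟩ ⟨hb, c, hc, hF⟩ ⟨hb', c', hc', hF'⟩
    dsimp only at hb hb' hc hc' hF hF'
    subst hb hb'
    have h1 := (hF ⟨fun _ _ => 1, 1⟩ ⟨fun _ _ => 1, 1⟩).symm.trans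
      (hF' ⟨fun _ _ => 1, 1⟩ ⟨fun _ _ => 1, 1⟩)
    have h2 : c 1 1 = c' 1 1 := h1
    have h3 := hc 1 1
    rw [h2] at h3
    have h4 : a = a' := f _ _ _ h3 (hc' 1 1)
    rw [h4]
  · rintro ⟨a, b⟩
    choose t ht using fun x y => s (d.extend.ract (d.extend.lact x a) y)
    exact ⟨⟨fun p q => e.extend.lact (p.fst 1 (b * q.snd))
        (e.extend.ract (t p.snd q.snd).fst (q.fst (p.snd * b) 1)),
        ⟨fun x y => (t x y).snd, b⟩⟩, rfl, fun x y => (t x y).fst, ht, fun _ _ => rfl⟩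

theorem main_ind (j : ℕ) : ∀ (k : ℕ)
    (U : Type) [Semigroup U] [Finite U]
    (A B : Type) [Semigroup A] [Semigroup B] [Finite A] [Finite B]
    (d : BowtieData A B), MemSL (k+1) A → MemSL (j+1) B → Divides U (Bowtie d) →
    MemSL (k + j + 2) U
  | 0, U, _, _, A, B, _, _, _, _, d, hA, hB, h => by
    rw [Nat.zero_add]
    exact ⟨⟨A, inferInstance, inferInstance⟩, ⟨B, inferInstance, inferInstance⟩, d, hA, hB, h⟩
  | k+1, U, _, _, A, B, _, _, _, _, d, hA, hB, h => by
    obtain ⟨C, D, e, hC, hD, hd⟩ := hA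
    have hpow : MemSL (k+1) (WithOne B → WithOne B → D.carrier) :=
      SL_pow (WithOne B) (k+1) _ (SL_pow (WithOne B) (k+1) D hD)
    have hM : MemSL (k+j+2) (MM D.carrier B) :=
      main_ind j k (MM D.carrier B) _ B (shiftData (oneCoe B) D.carrier) hpow hB
        (divides_of_rel (fun t s => t = s) (by rintro _ _ _ _ rfl rfl; rfl)
          (by rintro _ _ _ rfl rfl; rfl) fun s => ⟨s, rfl⟩)
    have : k + 1 + j + 2 = (k + j + 1) + 2 := by omega
    rw [this]
    exact ⟨⟨PP D.carrier B → PP D.carrier B → C.carrier, inferInstance, inferInstance⟩,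
      ⟨MM D.carrier B, inferInstance, inferInstance⟩, shiftData (psi D.carrier B) C.carrier,
      ⟨fun a b => funext fun x => funext fun y => hC.1 _ _,
        fun a => funext fun x => funext fun y => hC.2 _⟩, hM,
      Divides.trans' h (main_div d e hd)⟩

/-- For `m, n ≥ 1`: a finite semigroup dividing a two-sided semidirect
product `A ⋈ B` with `A ∈ SL^m` and `B ∈ SL^n` lies in `SL^(m+n)`. -/
theorem SL_bowtie_SL_sub_SL
    (m n : ℕ) (hm : 1 ≤ m) (hn : 1 ≤ n)
    (U : Type) [Semigroup U] [Finite U]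
    (A B : Type) [Semigroup A] [Semigroup B] [Finite A] [Finite B]
    (d : BowtieData A B) (hA : MemSL m A) (hB : MemSL n B)
    (hdiv : Divides U (Bowtie d)) :
    MemSL (m + n) U := by
  obtain ⟨k, rfl⟩ := Nat.exists_eq_add_of_le' hm
  obtain ⟨j, rfl⟩ := Nat.exists_eq_add_of_le' hn
  have : k + 1 + (j + 1) = k + j + 2 := by omega
  rw [this]
  exact main_ind j k U A B d hA hB hdiv
end

section
/- A finite semigroup S is aperiodic if and only if S ∈ SL^k for some k ≥ 1. -/
open Pointwise

/-- The `n`-th power of an element of a semigroup, for `n ≥ 1` (with the junk value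
`sgPow t 0 = t`). -/
def sgPow {T : Type} [Mul T] (t : T) : ℕ → T
  | 0 => t
  | 1 => t
  | (n+2) => sgPow t (n+1) * t

/-- A semigroup is aperiodic if for every element `t` there is `n ≥ 1` with
`t^(n+1) = t^n`. -/
def IsAperiodic (T : Type) [Mul T] : Prop :=
  ∀ t : T, ∃ n, 1 ≤ n ∧ sgPow t (n + 1) = sgPow t n

section Forward

theorem sgPow_coe {T : Type} [Semigroup T] (t : T) (n : ℕ) :
    ((sgPow t (n+1) : T) : WithOne T) = (t : WithOne T) ^ (n+1) := by
  induction n with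
  | zero => simp [sgPow]
  | succ n ih => rw [pow_succ, ← ih]; rfl

theorem sgPow_coe' {T : Type} [Semigroup T] (t : T) (n : ℕ) (hn : 1 ≤ n) :
    ((sgPow t n : T) : WithOne T) = (t : WithOne T) ^ n := by
  obtain ⟨m, rfl⟩ : ∃ m, n = m + 1 := ⟨n - 1, by omega⟩
  exact sgPow_coe t m

theorem sgPow_map {T S : Type} [Mul T] [Mul S] (f : T →ₙ* S) (t : T) (n : ℕ) :
    f (sgPow t (n+1)) = sgPow (f t) (n+1) := by
  induction n with
  | zero => rfl
  | succ n ih =>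
    change f (sgPow t (n+1) * t) = sgPow (f t) (n+1) * f t
    rw [map_mul, ih]

theorem aper_of_divides {S T : Type} [Semigroup S] [Semigroup T] (h : Divides S T)
    (hT : IsAperiodic T) : IsAperiodic S := by
  obtain ⟨U, f, hf⟩ := h
  intro s
  obtain ⟨u, rfl⟩ := hf s
  obtain ⟨n, hn, h⟩ := hT u
  refine ⟨n, hn, ?_⟩
  obtain ⟨m, rfl⟩ : ∃ m, n = m + 1 := ⟨n - 1, by omega⟩
  rw [← sgPow_map, ← sgPow_map]
  congr 1
  let i : U →ₙ* T := ⟨Subtype.val, fun _ _ => rfl⟩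
  apply Subtype.ext
  have h1 := sgPow_map i u (m+1)
  have h2 := sgPow_map i u m
  exact (h1.trans h).trans h2.symm

theorem aper_of_eqs {T : Type} [Semigroup T] (x y : T) (m : ℕ) (hm : 1 ≤ m)
    (hy : y = sgPow x m) (h1 : y * y * y * y = y * y * y)
    (h2 : (y * y * y * x * (y * y * y)) * (y * y * y * x * (y * y * y))
      = y * y * y * x * (y * y * y)) : ∃ n, 1 ≤ n ∧ sgPow x (n+1) = sgPow x n := by
  have hy' : (y : WithOne T) = (x : WithOne T) ^ m := by rw [hy, sgPow_coe' _ _ hm]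
  have e1 := congrArg (fun z : T => (z : WithOne T)) h1
  have e2 := congrArg (fun z : T => (z : WithOne T)) h2
  simp only [WithOne.coe_mul, hy', ← pow_add, ← pow_succ] at e1 e2
  refine ⟨6*m+1, by omega, ?_⟩
  apply WithOne.coe_injective
  rw [sgPow_coe, sgPow_coe]
  generalize (x : WithOne T) = z at *
  have e3 : ∀ j, z ^ (3*m+j+m) = z ^ (3*m+j) := by
    intro j
    have : 3*m+j+m = (m+m+m+m)+j := by ring
    rw [this, pow_add, e1, ← pow_add]; congr 1; ring
  have e4 : z ^ (12*m+2) = z ^ (6*m+1) := by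
    rw [show 12*m+2 = m+m+m+1+(m+m+m) + (m+m+m+1+(m+m+m)) by ring, e2]
    congr 1; ring
  have e5 : z ^ (12*m+2) = z ^ (6*m+2) := by
    have a1 := e3 (8*m+2)
    have a2 := e3 (7*m+2)
    have a3 := e3 (6*m+2)
    have a4 := e3 (5*m+2)
    have a5 := e3 (4*m+2)
    have a6 := e3 (3*m+2)
    ring_nf at a1 a2 a3 a4 a5 a6 ⊢
    rw [a1, a2, a3, a4, a5, a6]
  rw [← e5, e4]

theorem aper_bowtie {A B : Type} [Semigroup A] [Semigroup B] (d : BowtieData A B)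
    (hA : IsSemilattice A) (hB : IsAperiodic B) : IsAperiodic (Bowtie d) := by
  intro x
  obtain ⟨m, hm, h⟩ := hB x.snd
  obtain ⟨y, hy⟩ : ∃ y, y = sgPow x m := ⟨_, rfl⟩
  let π : Bowtie d →ₙ* B := ⟨Bowtie.snd, fun _ _ => rfl⟩
  have hye : y.snd = sgPow x.snd m := by
    obtain ⟨k, rfl⟩ : ∃ k, m = k + 1 := ⟨m - 1, by omega⟩
    rw [hy]; exact sgPow_map π x k
  have key : ∀ z : B, sgPow z (m+1) = sgPow z m →
      sgPow z m * z = sgPow z m ∧ z * sgPow z m = sgPow z m ∧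
      sgPow z m * sgPow z m = sgPow z m := by
    intro z hz
    have hz' := congrArg (fun z : B => (z : WithOne B)) hz
    simp only [sgPow_coe, sgPow_coe' _ _ hm] at hz'
    have hj : ∀ j, (z : WithOne B) ^ (m + j) = (z : WithOne B) ^ m := by
      intro j
      induction j with
      | zero => rfl
      | succ j ih => rw [← add_assoc, pow_succ, ih, ← pow_succ, hz']
    refine ⟨?_, ?_, ?_⟩ <;> apply WithOne.coe_injective <;>
      simp only [WithOne.coe_mul, sgPow_coe' _ _ hm]
    · rw [← pow_succ, hz']
    · rw [← pow_succ', hz']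
    · rw [← pow_add, hj]
  obtain ⟨k1, k2, k3⟩ := key x.snd h
  rw [← hye] at k1 k2 k3
  refine aper_of_eqs x y m hm hy ?_ ?_
  all_goals
    obtain ⟨s, t⟩ := x
    obtain ⟨u, e⟩ := y
    clear hy hye key
    simp only at k1 k2 k3
    have comm := hA.1
    have lcomm : ∀ a b c : A, a * (b * c) = b * (a * c) := fun a b c => by
      rw [← mul_assoc, comm a b, mul_assoc]
    have idem := hA.2
    have lidem : ∀ a b : A, a * (a * b) = a * b := fun a b => by rw [← mul_assoc, idem]
    simp only [Bowtie.mul_def, k1, k2, k3, d.mul_ract, d.lact_mul, ← d.mul_lact, ← d.ract_mul,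
      d.lact_ract, Bowtie.mk.injEq, and_true]
    simp only [mul_assoc, comm, lcomm, idem, lidem]

theorem aper_of_SL : ∀ (k : ℕ) (T : FinSgr), SL k T → IsAperiodic T.carrier
  | 0, _, h => h.elim
  | 1, T, h => fun t => ⟨1, le_rfl, h.2 t⟩
  | (k+2), T, h => by
    obtain ⟨A, B, d, hA, hB, hd⟩ := h
    exact aper_of_divides hd (aper_bowtie d hA (aper_of_SL (k+1) B hB))

end Forward

section Types

/-- Rank `k` types of words. -/
def Ty (A : Type) : ℕ → Type
  | 0 => Unit
  | (k+1) => Set (Ty A k × A × Ty A k)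

theorem Ty_finite (A : Type) [Finite A] : ∀ k, Finite (Ty A k)
  | 0 => inferInstanceAs (Finite Unit)
  | (k+1) => by
    have := Ty_finite A k
    exact inferInstanceAs (Finite (Set (Ty A k × A × Ty A k)))

/-- The rank `k` type of a word. -/
def tau {A : Type} : (k : ℕ) → List A → Ty A k
  | 0, _ => ()
  | (k+1), w => {t | ∃ p a q, w = p ++ a :: q ∧ t = (tau k p, a, tau k q)}

theorem tau_split {A : Type} {k : ℕ} {u v : List A} (h : tau (k+1) u = tau (k+1) v)
    {p : List A} {a : A} {q : List A} (hu : u = p ++ a :: q) :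
    ∃ p' q', v = p' ++ a :: q' ∧ tau k p = tau k p' ∧ tau k q = tau k q' := by
  have h1 : (tau k p, a, tau k q) ∈
      ({t | ∃ p a q, u = p ++ a :: q ∧ t = (tau k p, a, tau k q)} :
        Set (Ty A k × A × Ty A k)) := ⟨p, a, q, hu, rfl⟩
  have h2 : (tau k p, a, tau k q) ∈
      ({t | ∃ p a q, v = p ++ a :: q ∧ t = (tau k p, a, tau k q)} :
        Set (Ty A k × A × Ty A k)) := by
    have h' : ({t | ∃ p a q, u = p ++ a :: q ∧ t = (tau k p, a, tau k q)} :
        Set (Ty A k × A × Ty A k)) =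
        {t | ∃ p a q, v = p ++ a :: q ∧ t = (tau k p, a, tau k q)} := h
    rw [← h']; exact h1
  obtain ⟨p', a', q', hv, e⟩ := h2
  simp only [Prod.mk.injEq] at e
  obtain ⟨e1, rfl, e2⟩ := e
  exact ⟨p', q', hv, e1, e2⟩

theorem tau_ext {A : Type} {k : ℕ} {u v : List A}
    (h1 : ∀ p a q, u = p ++ a :: q →
      ∃ p' q', v = p' ++ a :: q' ∧ tau k p = tau k p' ∧ tau k q = tau k q')
    (h2 : ∀ p a q, v = p ++ a :: q →
      ∃ p' q', u = p' ++ a :: q' ∧ tau k p = tau k p' ∧ tau k q = tau k q') :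
    tau (k+1) u = tau (k+1) v := by
  apply Set.ext
  intro t
  constructor
  · rintro ⟨p, a, q, hu, rfl⟩
    obtain ⟨p', q', hv, e1, e2⟩ := h1 p a q hu
    exact ⟨p', a, q', hv, by rw [e1, e2]⟩
  · rintro ⟨p, a, q, hu, rfl⟩
    obtain ⟨p', q', hv, e1, e2⟩ := h2 p a q hu
    exact ⟨p', a, q', hv, by rw [e1, e2]⟩

theorem tau_pred {A : Type} {k : ℕ} : ∀ {u v : List A}, tau (k+1) u = tau (k+1) v →
    tau k u = tau k v := by
  induction k with
  | zero => intro u v _; rfl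
  | succ k ih =>
    intro u v h
    refine tau_ext ?_ ?_
    · intro p a q hu
      obtain ⟨p', q', hv, e1, e2⟩ := tau_split h hu
      exact ⟨p', q', hv, ih e1, ih e2⟩
    · intro p a q hu
      obtain ⟨p', q', hv, e1, e2⟩ := tau_split h.symm hu
      exact ⟨p', q', hv, ih e1, ih e2⟩

theorem tau_mono {A : Type} {j k : ℕ} (hjk : j ≤ k) {u v : List A} (h : tau k u = tau k v) :
    tau j u = tau j v := by
  induction hjk with
  | refl => exact h
  | step _ ih => exact ih (tau_pred h)

theorem tau_append_aux {A : Type} {k : ℕ}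
    (ih : ∀ {u u' v v' : List A}, tau k u = tau k u' → tau k v = tau k v' →
      tau k (u ++ v) = tau k (u' ++ v')) {u u' v v' : List A}
    (hu : tau (k+1) u = tau (k+1) u') (hv : tau (k+1) v = tau (k+1) v') :
    ∀ p a q, u ++ v = p ++ a :: q →
      ∃ p' q', u' ++ v' = p' ++ a :: q' ∧ tau k p = tau k p' ∧ tau k q = tau k q' := by
  intro p a q h
  rw [List.append_eq_append_iff] at h
  rcases h with ⟨r, rfl, hr⟩ | ⟨r, hr, h2⟩
  · obtain ⟨p', q', e, e1, e2⟩ := tau_split hv hr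
    exact ⟨u' ++ p', q', by simp [e], ih (tau_pred hu) e1, e2⟩
  · cases r with
    | nil =>
      simp only [List.append_nil, List.nil_append] at hr h2
      subst hr
      obtain ⟨p', q', e, e1, e2⟩ := tau_split hv (p := []) (a := a) (q := q) (by simp [← h2])
      refine ⟨u' ++ p', q', by simp [e], ?_, e2⟩
      simpa using ih (tau_pred hu) e1
    | cons b r =>
      simp only [List.cons_append, List.cons.injEq] at h2
      obtain ⟨rfl, rfl⟩ := h2
      obtain ⟨p', q', e, e1, e2⟩ := tau_split hu hr
      exact ⟨p', q' ++ v', by simp [e], e1, ih e2 (tau_pred hv)⟩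

theorem tau_append {A : Type} {k : ℕ} : ∀ {u u' v v' : List A}, tau k u = tau k u' →
    tau k v = tau k v' → tau k (u ++ v) = tau k (u' ++ v') := by
  induction k with
  | zero => intros; rfl
  | succ k ih =>
    intro u u' v v' hu hv
    exact tau_ext (tau_append_aux ih hu hv) (tau_append_aux ih hu.symm hv.symm)

theorem tau_mem {A : Type} {k : ℕ} (hk : 1 ≤ k) {u v : List A} (h : tau k u = tau k v)
    {a : A} (ha : a ∈ u) : a ∈ v := by
  have h1 : tau (0+1) u = tau (0+1) v := tau_mono hk h
  obtain ⟨p, q, hu⟩ := List.append_of_mem ha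
  obtain ⟨p', q', e, -, -⟩ := tau_split h1 hu
  simp [e]

end Types

section Subst

open Classical in
/-- One step of the block decomposition. -/
noncomputable def bstep {A M : Type} [Monoid M] (c : A) (φ : A → M) (s : List M × M) (a : A) :
    List M × M :=
  if a = c then (s.1 ++ [s.2], 1) else (s.1, s.2 * φ a)

/-- Block decomposition: values of blocks terminated by `c`, and value of the last block. -/
noncomputable def blk {A M : Type} [Monoid M] (c : A) (φ : A → M) (w : List A) : List M × M :=
  w.foldl (bstep c φ) ([], 1)

variable {A M : Type} [Monoid M] (c : A) (φ : A → M)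

theorem blk_nil : blk c φ [] = ([], 1) := rfl

theorem blk_snoc (w : List A) (a : A) : blk c φ (w ++ [a]) = bstep c φ (blk c φ w) a := by
  simp [blk]

theorem blk_snoc_c (w : List A) : blk c φ (w ++ [c]) = ((blk c φ w).1 ++ [(blk c φ w).2], 1) := by
  simp [blk_snoc, bstep]

theorem blk_snoc_ne (w : List A) {a : A} (h : a ≠ c) :
    blk c φ (w ++ [a]) = ((blk c φ w).1, (blk c φ w).2 * φ a) := by
  simp [blk_snoc, bstep, h]

theorem blk_mid (r q : List A) :
    blk c φ (r ++ c :: q) = ((blk c φ r).1 ++ (blk c φ r).2 :: (blk c φ q).1, (blk c φ q).2) := by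
  induction q using List.reverseRecOn with
  | nil => rw [blk_snoc_c, blk_nil]
  | append_singleton q a ih =>
    have : r ++ c :: (q ++ [a]) = (r ++ c :: q) ++ [a] := by simp
    rw [this]
    by_cases h : a = c
    · subst h
      rw [blk_snoc_c, blk_snoc_c, ih]; simp
    · rw [blk_snoc_ne _ _ _ h, blk_snoc_ne _ _ _ h, ih]

theorem blk_free (w : List A) (h : c ∉ w) : blk c φ w = ([], (w.map φ).prod) := by
  induction w using List.reverseRecOn with
  | nil => rfl
  | append_singleton q a ih =>
    simp only [List.mem_append, List.mem_singleton, not_or] at h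
    rw [blk_snoc_ne _ _ _ (Ne.symm h.2), ih h.1]; simp

theorem blk_split (w : List A) : ∀ (P : List M) (m : M) (Q : List M),
    (blk c φ w).1 = P ++ m :: Q →
    ∃ r q, w = r ++ c :: q ∧ P = (blk c φ r).1 ∧ m = (blk c φ r).2 ∧ Q = (blk c φ q).1 := by
  induction w using List.reverseRecOn with
  | nil => intro P m Q h; simp [blk_nil] at h
  | append_singleton w a ih =>
    intro P m Q h
    by_cases hac : a = c
    · subst hac
      rw [blk_snoc_c] at h
      simp only at h
      induction Q using List.reverseRecOn with
      | nil =>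
        have := List.append_inj' h rfl
        simp only [List.cons.injEq, and_true] at this
        exact ⟨w, [], rfl, this.1.symm, this.2.symm, rfl⟩
      | append_singleton Q z _ =>
        have h' : (blk a φ w).1 ++ [(blk a φ w).2] = (P ++ m :: Q) ++ [z] := by simp [h]
        have := List.append_inj' h' rfl
        simp only [List.cons.injEq, and_true] at this
        obtain ⟨r, q, rfl, e1, e2, e3⟩ := ih _ _ _ this.1
        refine ⟨r, q ++ [a], by simp, e1, e2, ?_⟩
        rw [blk_snoc_c, ← this.2, e3, blk_mid]
    · rw [blk_snoc_ne _ _ _ hac] at h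
      obtain ⟨r, q, rfl, e1, e2, e3⟩ := ih _ _ _ h
      refine ⟨r, q ++ [a], by simp, e1, e2, ?_⟩
      rw [blk_snoc_ne _ _ _ hac, e3]

theorem blk_prod (w : List A) :
    (w.map φ).prod = ((blk c φ w).1.map (fun m => m * φ c)).prod * (blk c φ w).2 := by
  induction w using List.reverseRecOn with
  | nil => simp [blk_nil]
  | append_singleton q a ih =>
    by_cases hac : a = c
    · subst hac
      rw [blk_snoc_c]; simp [ih, mul_assoc]
    · rw [blk_snoc_ne _ _ _ hac]; simp [ih, mul_assoc]

theorem last_split (w : List A) (h : c ∈ w) : ∃ p x, w = p ++ c :: x ∧ c ∉ x := by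
  induction w using List.reverseRecOn with
  | nil => simp at h
  | append_singleton w a ih =>
    by_cases hac : a = c
    · exact ⟨w, [], by simp [hac], by simp⟩
    · have : c ∈ w := by
        simp only [List.mem_append, List.mem_singleton] at h
        rcases h with h | h
        · exact h
        · exact absurd h.symm hac
      obtain ⟨p, x, rfl, hx⟩ := ih this
      refine ⟨p, x ++ [a], by simp, ?_⟩
      simp [hx, Ne.symm hac]

theorem first_split (w : List A) (h : c ∈ w) : ∃ x q, w = x ++ c :: q ∧ c ∉ x := by
  induction w with
  | nil => simp at h
  | cons a w ih =>
    by_cases hac : a = c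
    · exact ⟨[], w, by simp [hac], by simp⟩
    · have : c ∈ w := by
        simp only [List.mem_cons] at h
        rcases h with h | h
        · exact absurd h.symm hac
        · exact h
      obtain ⟨p, x, rfl, hx⟩ := ih this
      refine ⟨a :: p, x, by simp, ?_⟩
      simp [hx, Ne.symm hac]

/-- The last block is determined by types. -/
theorem rho_def (P : A → Prop) (j : ℕ)
    (hj : ∀ u v : List A, (∀ a ∈ u, P a) → (∀ a ∈ v, P a) → c ∉ u → c ∉ v →
      tau j u = tau j v → (u.map φ).prod = (v.map φ).prod)
    (u v : List A) (hu : ∀ a ∈ u, P a) (hv : ∀ a ∈ v, P a)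
    (h : tau (max j 1 + 1) u = tau (max j 1 + 1) v) : (blk c φ u).2 = (blk c φ v).2 := by
  by_cases hc : c ∈ u
  · obtain ⟨p, x, rfl, hx⟩ := last_split c u hc
    obtain ⟨p', x', rfl, -, e⟩ := tau_split h rfl
    have hx' : c ∉ x' := fun hh => hx (tau_mem (le_max_right j 1) e.symm hh)
    rw [blk_mid, blk_mid, blk_free _ _ _ hx, blk_free _ _ _ hx']
    exact hj _ _ (fun a ha => hu a (by simp [ha])) (fun a ha => hv a (by simp [ha])) hx hx'
      (tau_mono (le_max_left j 1) e)
  · have hc' : c ∉ v := fun hh => hc (tau_mem (by omega) h.symm hh)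
    rw [blk_free _ _ _ hc, blk_free _ _ _ hc']
    exact hj _ _ hu hv hc hc' (tau_mono (by omega) h)

theorem sigma_def (P : A → Prop) (R : ℕ)
    (hR : ∀ u v : List A, (∀ a ∈ u, P a) → (∀ a ∈ v, P a) →
      tau R u = tau R v → (blk c φ u).2 = (blk c φ v).2) (k : ℕ) :
    ∃ K, ∀ u v : List A, (∀ a ∈ u, P a) → (∀ a ∈ v, P a) →
      tau K u = tau K v → tau k (blk c φ u).1 = tau k (blk c φ v).1 := by
  induction k with
  | zero => exact ⟨0, fun _ _ _ _ _ => rfl⟩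
  | succ k ih =>
    obtain ⟨K, hK⟩ := ih
    refine ⟨max K R + 1, ?_⟩
    have key : ∀ u v : List A, (∀ a ∈ u, P a) → (∀ a ∈ v, P a) →
      tau (max K R + 1) u = tau (max K R + 1) v → ∀ p a q, (blk c φ u).1 = p ++ a :: q →
      ∃ p' q', (blk c φ v).1 = p' ++ a :: q' ∧ tau k p = tau k p' ∧ tau k q = tau k q' := by
      intro u v hu hv h p a q e
      obtain ⟨r, s, rfl, rfl, rfl, rfl⟩ := blk_split c φ u p a q e
      obtain ⟨r', s', rfl, e1, e2⟩ := tau_split h rfl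
      have hr : ∀ a ∈ r, P a := fun a ha => hu a (by simp [ha])
      have hs : ∀ a ∈ s, P a := fun a ha => hu a (by simp [ha])
      have hr' : ∀ a ∈ r', P a := fun a ha => hv a (by simp [ha])
      have hs' : ∀ a ∈ s', P a := fun a ha => hv a (by simp [ha])
      refine ⟨(blk c φ r').1, (blk c φ s').1, ?_, ?_, ?_⟩
      · rw [blk_mid, hR r r' hr hr' (tau_mono (le_max_right _ _) e1)]
      · exact hK _ _ hr hr' (tau_mono (le_max_left _ _) e1)
      · exact hK _ _ hs hs' (tau_mono (le_max_left _ _) e2)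
    intro u v hu hv h
    exact tau_ext (key u v hu hv h) (key v u hv hu h.symm)

end Subst

section Local

variable {M : Type} [Monoid M] (c : M)

/-- The submonoid of `m` with `c m ∈ M c`. -/
def locSub : Submonoid M where
  carrier := {m | ∃ z, c * m = z * c}
  one_mem' := ⟨1, by simp⟩
  mul_mem' := by
    rintro a b ⟨z, hz⟩ ⟨z', hz'⟩
    exact ⟨z * z', by rw [← mul_assoc, hz, mul_assoc, hz', mul_assoc]⟩

/-- The congruence defining the local divisor. -/
def locCon : Con (locSub c) where
  r a b := c * (a : M) = c * (b : M)
  iseqv := ⟨fun _ => rfl, fun h => h.symm, fun h h' => h.trans h'⟩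
  mul' := by
    rintro a b a' b' h h'
    obtain ⟨z, hz⟩ := b.2
    simp only [Submonoid.coe_mul]
    rw [← mul_assoc, h, hz, mul_assoc, h', ← mul_assoc, ← hz, mul_assoc]

/-- The embedding of the local divisor. -/
def locEmb : (locCon c).Quotient → M := fun q => Con.liftOn q (fun a => c * (a : M)) (fun _ _ h => h)

theorem locEmb_inj : Function.Injective (locEmb c) := by
  intro a b
  induction a using Con.induction_on with | H a => ?_
  induction b using Con.induction_on with | H b => ?_
  intro h
  exact (Con.eq _).2 h

/-- Letters of the local divisor. -/
def locLet (m : M) : (locCon c).Quotient := ((⟨m * c, c * m, by rw [mul_assoc]⟩ : locSub c) :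
  (locCon c).Quotient)

theorem locEmb_prod (L : List M) :
    locEmb c ((L.map (locLet c)).prod) = c * (L.map (fun m => m * c)).prod := by
  have : ∃ a : locSub c, (L.map (locLet c)).prod = (a : (locCon c).Quotient) ∧
      (a : M) = (L.map (fun m => m * c)).prod := by
    induction L with
    | nil => exact ⟨1, by simp, by simp⟩
    | cons m L ih =>
      obtain ⟨a, h1, h2⟩ := ih
      refine ⟨⟨m * c, c * m, by rw [mul_assoc]⟩ * a, ?_, ?_⟩
      · rw [List.map_cons, List.prod_cons, h1]; rfl
      · simp [h2]
  obtain ⟨a, h1, h2⟩ := this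
  rw [h1, ← h2]; rfl

theorem loc_aper (h : ∀ x : M, ∃ n : ℕ, x ^ (n+1) = x ^ n) (x : (locCon c).Quotient) :
    ∃ n : ℕ, x ^ (n+1) = x ^ n := by
  induction x using Con.induction_on with | H a => ?_
  obtain ⟨n, hn⟩ := h a
  refine ⟨n, ?_⟩
  have : a ^ (n+1) = a ^ n := Subtype.ext (by simpa using hn)
  have e := congrArg (locCon c).mk' this
  rwa [map_pow, map_pow] at e

theorem loc_card [Finite M] (h : ∀ x : M, ∃ n : ℕ, x ^ (n+1) = x ^ n) (hc : c ≠ 1) :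
    Nat.card (locCon c).Quotient < Nat.card M := by
  apply Nat.lt_of_le_of_ne (Nat.card_le_card_of_injective _ (locEmb_inj c))
  intro e
  have hb := (Nat.bijective_iff_injective_and_card (locEmb c)).2 ⟨locEmb_inj c, e⟩
  obtain ⟨q, hq⟩ := hb.2 1
  induction q using Con.induction_on with | H a => ?_
  have hq' : c * (a : M) = 1 := hq
  obtain ⟨n, hn⟩ := h c
  have hp : ∀ n : ℕ, c ^ n * (a : M) ^ n = 1 := by
    intro n
    induction n with
    | zero => simp
    | succ n ih => rw [pow_succ, pow_succ', mul_assoc, ← mul_assoc c, hq', one_mul, ih]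
  apply hc
  calc c = c * (c ^ n * (a : M) ^ n) := by rw [hp, mul_one]
    _ = 1 := by rw [← mul_assoc, ← pow_succ', hn, hp]

end Local

theorem main_def (n : ℕ) : ∀ (M : Type) [Monoid M] [Finite M], Nat.card M ≤ n →
    (∀ x : M, ∃ n : ℕ, x ^ (n+1) = x ^ n) → ∀ (A : Type) [Finite A] (φ : A → M),
    ∃ k, ∀ u v : List A, tau k u = tau k v → (u.map φ).prod = (v.map φ).prod := by
  induction n with
  | zero =>
    intro M _ _ hM
    have : 0 < Nat.card M := Nat.card_pos
    omega
  | succ n ihn =>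
    intro M _ _ hM hap A _ φ
    suffices H : ∀ C : Set A, C.Finite → ∃ k, ∀ u v : List A, (∀ a ∈ u, a ∈ C ∨ φ a = 1) →
        (∀ a ∈ v, a ∈ C ∨ φ a = 1) → tau k u = tau k v →
        (u.map φ).prod = (v.map φ).prod by
      obtain ⟨k, hk⟩ := H Set.univ Set.finite_univ
      exact ⟨k, fun u v h => hk u v (by simp) (by simp) h⟩
    intro C hC
    induction C, hC using Set.Finite.induction_on with
    | empty =>
      refine ⟨0, fun u v hu hv _ => ?_⟩
      rw [List.prod_eq_one, List.prod_eq_one]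
      · simpa using hv
      · simpa using hu
    | @insert c C _ _ ih =>
      obtain ⟨j, hj⟩ := ih
      by_cases hc1 : φ c = 1
      · refine ⟨j, fun u v hu hv h => hj u v ?_ ?_ h⟩
        · intro a ha
          rcases hu a ha with (rfl | h) | h
          exacts [Or.inr hc1, Or.inl h, Or.inr h]
        · intro a ha
          rcases hv a ha with (rfl | h) | h
          exacts [Or.inr hc1, Or.inl h, Or.inr h]
      let P : A → Prop := fun a => a ∈ insert c C ∨ φ a = 1
      have red : ∀ u : List A, (∀ a ∈ u, P a) → c ∉ u → ∀ a ∈ u, a ∈ C ∨ φ a = 1 := by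
        intro u hu hcu a ha
        rcases hu a ha with (rfl | h) | h
        exacts [absurd ha hcu, Or.inl h, Or.inr h]
      have hj' : ∀ u v : List A, (∀ a ∈ u, P a) → (∀ a ∈ v, P a) → c ∉ u → c ∉ v →
          tau j u = tau j v → (u.map φ).prod = (v.map φ).prod :=
        fun u v hu hv hcu hcv h => hj u v (red u hu hcu) (red v hv hcv) h
      have hrho := rho_def c φ P j hj'
      haveI : Finite (locCon (φ c)).Quotient := Finite.of_injective _ (locEmb_inj (φ c))
      obtain ⟨k, hk⟩ := ihn (locCon (φ c)).Quotient
        (by have := loc_card (φ c) hap hc1; omega) (loc_aper (φ c) hap) M (locLet (φ c))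
      obtain ⟨K, hK⟩ := sigma_def c φ P _ hrho k
      refine ⟨max K (max j 1 + 1) + 1, ?_⟩
      intro u v hu hv h
      by_cases hcu : c ∈ u
      · obtain ⟨x, q, rfl, hx⟩ := first_split c u hcu
        obtain ⟨x', q', rfl, e1, e2⟩ := tau_split h rfl
        have hx' : c ∉ x' := fun hh => hx (tau_mem (by omega) e1.symm hh)
        have hPx : ∀ a ∈ x, P a := fun a ha => hu a (by simp [ha])
        have hPq : ∀ a ∈ q, P a := fun a ha => hu a (by simp [ha])
        have hPx' : ∀ a ∈ x', P a := fun a ha => hv a (by simp [ha])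
        have hPq' : ∀ a ∈ q', P a := fun a ha => hv a (by simp [ha])
        have a1 := hj' x x' hPx hPx' hx hx' (tau_mono (by omega) e1)
        have a2 := hrho q q' hPq hPq' (tau_mono (by omega) e2)
        have a3 := congrArg (locEmb (φ c)) (hk _ _ (hK q q' hPq hPq' (tau_mono (by omega) e2)))
        rw [locEmb_prod, locEmb_prod] at a3
        simp only [List.map_append, List.map_cons, List.prod_append, List.prod_cons]
        rw [blk_prod c φ q, blk_prod c φ q', a1, a2, ← mul_assoc (φ c), a3, mul_assoc (φ c)]
      · have hcv : c ∉ v := fun hh => hcu (tau_mem (by omega) h.symm hh)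
        exact hj' u v hu hv hcu hcv (tau_mono (by omega) h)

section Alg

/-- The congruence of having the same rank `k` type. -/
def tauCon (A : Type) (k : ℕ) : Con (FreeMonoid A) where
  r u v := tau k u.toList = tau k v.toList
  iseqv := ⟨fun _ => rfl, fun h => h.symm, fun h h' => h.trans h'⟩
  mul' h h' := tau_append h h'

theorem tauCon_finite (A : Type) [Finite A] (k : ℕ) : Finite (tauCon A k).Quotient := by
  have := Ty_finite A k
  refine Finite.of_injective (fun q => Con.liftOn q (fun u => tau k u.toList) (fun _ _ h => h)
    : (tauCon A k).Quotient → Ty A k) ?_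
  intro a b
  induction a using Con.induction_on with | H a => ?_
  induction b using Con.induction_on with | H b => ?_
  intro h
  exact (Con.eq _).2 h

theorem divides_of_homs {W S T : Type} [Mul W] [Mul S] [Mul T] (α : W →ₙ* T) (β : W →ₙ* S)
    (hβ : Function.Surjective β) (h : ∀ x y, α x = α y → β x = β y) : Divides S T := by
  have hex : ∀ t : α.srange, ∃ w, α w = t := fun t => t.2
  choose g hg using hex
  refine ⟨α.srange, ⟨fun t => β (g t), ?_⟩, ?_⟩
  · intro s t
    rw [← map_mul]
    apply h
    rw [hg, map_mul, hg, hg]; rfl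
  · intro s
    obtain ⟨w, rfl⟩ := hβ s
    exact ⟨⟨α w, w, rfl⟩, h _ _ (hg _)⟩

/-- Sets under union. -/
structure USet_s9 (X : Type) where
  set : Set X

instance (X : Type) : Semigroup (USet_s9 X) where
  mul a b := ⟨a.set ∪ b.set⟩
  mul_assoc a b c := congrArg USet_s9.mk (Set.union_assoc _ _ _)

theorem USet_s9.mul_eq {X : Type} (a b : USet_s9 X) : a * b = ⟨a.set ∪ b.set⟩ := rfl

instance (X : Type) [Finite X] : Finite (USet_s9 X) :=
  Finite.of_injective USet_s9.set (fun a b h => by cases a; cases b; simpa using h)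

/-- The action data. -/
def tauData (A Q : Type) [Semigroup Q] : BowtieData (USet_s9 (Q × A × Q)) Q where
  lact t s := ⟨(fun x => (t * x.1, x.2.1, x.2.2)) '' s.set⟩
  ract s t := ⟨(fun x => (x.1, x.2.1, x.2.2 * t)) '' s.set⟩
  lact_mul t s s' := by simp [USet_s9.mul_eq, Set.image_union]
  mul_ract t s s' := by simp [USet_s9.mul_eq, Set.image_union]
  mul_lact t t' s := by simp [Set.image_image, mul_assoc]
  ract_mul t t' s := by simp [Set.image_image, mul_assoc]
  lact_ract t t' s := by simp [Set.image_image]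

/-- The set of factorizations of a word. -/
def fset (A : Type) (k : ℕ) (w : FreeMonoid A) :
    USet_s9 ((tauCon A k).Quotient × A × (tauCon A k).Quotient) :=
  ⟨{t | ∃ (p : FreeMonoid A) (a : A) (q : FreeMonoid A),
    w.toList = p.toList ++ a :: q.toList ∧ t = ((p : (tauCon A k).Quotient), a, (q : (tauCon A k).Quotient))}⟩

/-- The homomorphism to the two-sided semidirect product. -/
def tauHom (A : Type) (k : ℕ) :
    FreeMonoid A →ₙ* Bowtie (tauData A (tauCon A k).Quotient) where
  toFun w := ⟨fset A k w, w⟩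
  map_mul' u v := by
    rw [Bowtie.mul_def]
    congr 1
    rw [USet_s9.mul_eq]
    unfold fset tauData
    congr 1
    ext t
    simp only [Set.mem_ofPred_eq, Set.mem_union, Set.mem_image, FreeMonoid.toList_mul]
    constructor
    · rintro ⟨p, a, q, h, rfl⟩
      rw [List.append_eq_append_iff] at h
      rcases h with ⟨r, h1, h2⟩ | ⟨r, h1, h2⟩
      · refine Or.inr ⟨_, ⟨FreeMonoid.ofList r, a, q, h2, rfl⟩, ?_⟩
        have : p = u * FreeMonoid.ofList r := h1
        simp [this]
      · cases r with
        | nil =>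
          refine Or.inr ⟨_, ⟨1, a, q, by simpa using h2.symm, rfl⟩, ?_⟩
          have : u = p := by simpa using h1
          simp [this]
        | cons b r =>
          simp only [List.cons_append, List.cons.injEq] at h2
          obtain ⟨rfl, h2⟩ := h2
          refine Or.inl ⟨_, ⟨p, a, FreeMonoid.ofList r, h1, rfl⟩, ?_⟩
          have : q = FreeMonoid.ofList r * v := h2
          simp [this]
    · rintro (⟨_, ⟨p, a, q, h, rfl⟩, rfl⟩ | ⟨_, ⟨p, a, q, h, rfl⟩, rfl⟩)
      · exact ⟨p, a, q * v, by simp [h], by simp⟩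
      · exact ⟨u * p, a, q, by simp [h], by simp⟩

theorem tauHom_eq (A : Type) (k : ℕ) (u v : FreeMonoid A) (h : tauHom A k u = tauHom A k v) :
    tau (k+1) u.toList = tau (k+1) v.toList := by
  have h0 : (fset A k u).set = (fset A k v).set := congrArg (fun z => z.fst.set) h
  have key : ∀ u v : FreeMonoid A, (fset A k u).set = (fset A k v).set →
      ∀ p a q, u.toList = p ++ a :: q →
      ∃ p' q', v.toList = p' ++ a :: q' ∧ tau k p = tau k p' ∧ tau k q = tau k q' := by
    intro u v h p a q e
    have h1 : (((FreeMonoid.ofList p : FreeMonoid A) : (tauCon A k).Quotient), a,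
        ((FreeMonoid.ofList q : FreeMonoid A) : (tauCon A k).Quotient)) ∈ (fset A k u).set :=
      ⟨_, _, _, e, rfl⟩
    rw [h] at h1
    obtain ⟨p', a', q', e', e2⟩ := h1
    simp only [Prod.mk.injEq] at e2
    obtain ⟨e3, rfl, e4⟩ := e2
    exact ⟨p'.toList, q'.toList, e', (Con.eq _).1 e3, (Con.eq _).1 e4⟩
  exact tau_ext (key u v h0) (key v u h0.symm)

theorem SL_step (A : Type) [Finite A] (k : ℕ)
    (hk : SL (k+1) ⟨(tauCon A (k+1)).Quotient, inferInstance, tauCon_finite A (k+1)⟩)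
    (W : Type) [Mul W] (ι : W →ₙ* FreeMonoid A) (S : FinSgr) (β : W →ₙ* S.carrier)
    (hβ : Function.Surjective β)
    (h : ∀ x y, tau (k+2) (ι x).toList = tau (k+2) (ι y).toList → β x = β y) :
    SL (k+2) S := by
  haveI := tauCon_finite A (k+1)
  refine ⟨⟨USet_s9 ((tauCon A (k+1)).Quotient × A × (tauCon A (k+1)).Quotient), inferInstance,
    inferInstance⟩, _, tauData A (tauCon A (k+1)).Quotient, ?_, hk, ?_⟩
  · refine ⟨fun a b => ?_, fun a => ?_⟩
    · exact congrArg USet_s9.mk (Set.union_comm _ _)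
    · exact congrArg USet_s9.mk (Set.union_self _)
  · exact divides_of_homs ((tauHom A (k+1)).comp ι) β hβ
      (fun x y e => h x y (tauHom_eq A (k+1) _ _ e))

theorem tau_one {A : Type} {u v : List A} (h : ∀ a, a ∈ u ↔ a ∈ v) :
    tau 1 u = tau 1 v := by
  refine tau_ext (k := 0) ?_ ?_
  · intro p a q e
    obtain ⟨s, t, e⟩ := List.append_of_mem ((h a).1 (by simp [e]))
    exact ⟨s, t, e, rfl, rfl⟩
  · intro p a q e
    obtain ⟨s, t, e⟩ := List.append_of_mem ((h a).2 (by simp [e]))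
    exact ⟨s, t, e, rfl, rfl⟩

theorem SL_tau (A : Type) [Finite A] (k : ℕ) :
    SL (k+1) ⟨(tauCon A (k+1)).Quotient, inferInstance, tauCon_finite A (k+1)⟩ := by
  induction k with
  | zero =>
    refine ⟨fun a b => ?_, fun a => ?_⟩
    · change (tauCon A 1).Quotient at a b
      induction a using Con.induction_on with | H a => ?_
      induction b using Con.induction_on with | H b => ?_
      exact (Con.eq _).2 (tau_one (by simp [or_comm]))
    · change (tauCon A 1).Quotient at a
      induction a using Con.induction_on with | H a => ?_
      exact (Con.eq _).2 (tau_one (by simp))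
  | succ k ih =>
    refine SL_step A k ih (FreeMonoid A) (MulHom.id _) _ ((tauCon A (k+2)).mk' : _ →ₙ* _) ?_ ?_
    · exact Con.mk'_surjective
    · intro x y e
      exact (Con.eq _).2 e

end Alg

/-- A finite semigroup is aperiodic if and only if it lies in `SL^k`
for some `k ≥ 1`. -/
theorem aperiodic_iff_mem_SL (S : Type) [Semigroup S] [Finite S] :
    IsAperiodic S ↔ ∃ k, 1 ≤ k ∧ MemSL k S := by
  constructor
  · intro h
    have hap : ∀ x : WithOne S, ∃ n : ℕ, x ^ (n+1) = x ^ n := by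
      intro x
      by_cases hx : x = 1
      · exact ⟨0, by simp [hx]⟩
      · obtain ⟨t, rfl⟩ := WithOne.ne_one_iff_exists.1 hx
        obtain ⟨n, hn, e⟩ := h t
        exact ⟨n, by rw [← sgPow_coe, e, sgPow_coe' _ _ hn]⟩
    haveI : Finite (WithOne S) := inferInstanceAs (Finite (Option S))
    obtain ⟨k, hk⟩ := main_def _ (WithOne S) le_rfl hap S (fun s => (s : WithOne S))
    refine ⟨k + 2, by omega, ?_⟩
    refine SL_step S k (SL_tau S k) (FreeSemigroup S) (FreeSemigroup.lift FreeMonoid.of)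
      ⟨S, inferInstance, inferInstance⟩ (FreeSemigroup.lift id) ?_ ?_
    · intro s
      exact ⟨FreeSemigroup.of s, by simp⟩
    · intro x y e
      have key : ∀ x : FreeSemigroup S,
          (List.map (fun s : S => (s : WithOne S))
            (FreeMonoid.toList (FreeSemigroup.lift FreeMonoid.of x))).prod = ((FreeSemigroup.lift id x : S) : WithOne S) := by
        intro x
        induction x using FreeSemigroup.recOnMul with
        | ih1 a => simp
        | ih2 a b h1 h2 =>
          rw [map_mul (FreeSemigroup.lift FreeMonoid.of), map_mul (FreeSemigroup.lift id),
            FreeMonoid.toList_mul, List.map_append, List.prod_append, h1, h2,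
            WithOne.coe_mul]
      apply WithOne.coe_injective
      have := hk _ _ (tau_mono (by omega) e)
      rw [key, key] at this
      exact this
  · rintro ⟨k, -, h⟩
    exact aper_of_SL k _ h
end

section
/- Let S be a finite semigroup and let G be a subsemigroup of the power semigroup 2^S that is a group under setwise multiplication (i.e., there is E ∈ G with E·Y = Y·E = Y for all Y ∈ G, and every Y ∈ G has an inverse relative to E). Then ⋃_{X ∈ G} X ∈ Sat(G), i.e., the union of all members of G belongs to every saturated collection of subsets of S containing G. -/
open Pointwise

/-- A collection `U` of subsets of a semigroup `S` is saturated if it is closed under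
setwise products, under taking subsets, and under the operation sending `X ∈ U` to
`⋃_{k ≥ n} X^k` whenever `n ≥ 1` and the setwise power `X^n` is idempotent. -/
def Saturated {S : Type} [Semigroup S] (U : Set (Set S)) : Prop :=
  (∀ X ∈ U, ∀ Y ∈ U, X * Y ∈ U) ∧
  (∀ X ∈ U, ∀ Y : Set S, Y ⊆ X → Y ∈ U) ∧
  (∀ X ∈ U, ∀ n, 1 ≤ n → sgPow X n * sgPow X n = sgPow X n → (⋃ k, ⋃ (_ : n ≤ k), sgPow X k) ∈ U)

/-- The saturation of a collection of subsets of `S`: the least saturated collection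
containing it.  `X ∈ Sat U₀` iff `X` belongs to every saturated collection containing `U₀`. -/
def Sat {S : Type} [Semigroup S] (U₀ : Set (Set S)) : Set (Set S) :=
  {X | ∀ U : Set (Set S), Saturated U → U₀ ⊆ U → X ∈ U}

theorem sgPow_succ_aux {T : Type} [Mul T] (t : T) (n : ℕ) (hn : 1 ≤ n) :
    sgPow t (n + 1) = sgPow t n * t := by
  obtain ⟨m, rfl⟩ : ∃ m, n = m + 1 := ⟨n - 1, by omega⟩
  rfl

theorem sgPow_add_aux {T : Type} [Semigroup T] (t : T) (m n : ℕ) (hm : 1 ≤ m) (hn : 1 ≤ n) :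
    sgPow t (m + n) = sgPow t m * sgPow t n := by
  induction n, hn using Nat.le_induction with
  | base => exact sgPow_succ_aux t m hm
  | succ n hn ih =>
    rw [← add_assoc, sgPow_succ_aux t (m + n) (by omega), ih, sgPow_succ_aux t n hn, mul_assoc]

/-- If `G` is a subsemigroup of the power semigroup `2^S` of a finite
semigroup `S` which is a group under setwise multiplication, then the union of all
members of `G` belongs to the saturation of `G`. -/
theorem union_of_group_mem_sat
    (S : Type) [Semigroup S] [Finite S] (G : Subsemigroup (Set S))
    (E : Set S) (hE : E ∈ G)
    (hid : ∀ Y ∈ G, E * Y = Y ∧ Y * E = Y)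
    (hinv : ∀ Y ∈ G, ∃ Z ∈ G, Y * Z = E ∧ Z * Y = E) :
    ⋃₀ (G : Set (Set S)) ∈ Sat (G : Set (Set S)) := by
  intro U hU hGU
  obtain ⟨hmul, hsub, hun⟩ := hU
  have hpow : ∀ X ∈ G, ∀ n, 1 ≤ n → sgPow X n ∈ G := by
    intro X hX n hn
    induction n, hn using Nat.le_induction with
    | base => exact hX
    | succ n hn ih =>
      rw [sgPow_succ_aux X n hn]
      exact G.mul_mem ih hX
  have hord : ∀ X ∈ G, ∃ n, 1 ≤ n ∧ sgPow X n = E := by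
    intro X hX
    have key : ∀ i j : ℕ, i < j → sgPow X (i + 1) = sgPow X (j + 1) →
        ∃ n, 1 ≤ n ∧ sgPow X n = E := by
      intro i j hij h
      refine ⟨j - i, by omega, ?_⟩
      obtain ⟨Z, hZ, h1, h2⟩ := hinv _ (hpow X hX (i + 1) (by omega))
      have h3 : sgPow X (j + 1) = sgPow X (i + 1) * sgPow X (j - i) := by
        rw [← sgPow_add_aux X _ _ (by omega) (by omega)]
        congr 1
        omega
      rw [← h] at h3
      have h4 := congrArg (fun A => Z * A) h3
      simp only [← mul_assoc, h2] at h4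
      rw [(hid _ (hpow X hX (j - i) (by omega))).1] at h4
      exact h4.symm
    obtain ⟨i, j, hne, h⟩ := Finite.exists_ne_map_eq_of_infinite (fun n : ℕ => sgPow X (n + 1))
    rcases lt_or_gt_of_ne hne with hlt | hlt
    · exact key i j hlt h
    · exact key j i hlt h.symm
  have hcyc : ∀ X ∈ G, ∃ C ∈ U, E ⊆ C ∧ X ⊆ C := by
    intro X hX
    obtain ⟨n, hn, hnE⟩ := hord X hX
    refine ⟨_, hun X (hGU hX) n hn (by rw [hnE]; exact (hid E hE).1), ?_, ?_⟩
    · rw [← hnE]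
      exact Set.subset_iUnion₂ (s := fun k (_ : n ≤ k) => sgPow X k) n le_rfl
    · have h : sgPow X (n + 1) = X := by
        rw [sgPow_succ_aux X n hn, hnE]
        exact (hid X hX).1
      have h2 := Set.subset_iUnion₂ (s := fun k (_ : n ≤ k) => sgPow X k) (n + 1) (Nat.le_succ n)
      simp only [h] at h2
      exact h2
  have hmain : ∀ F : Set (Set S), F.Finite → F ⊆ (G : Set (Set S)) →
      ∃ P ∈ U, E ⊆ P ∧ ∀ Y ∈ F, Y ⊆ P := by
    intro F hF
    induction F, hF using Set.Finite.induction_on with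
    | empty => exact fun _ => ⟨E, hGU hE, subset_rfl, fun Y hY => absurd hY (by simp)⟩
    | @insert X F _ _ ih =>
      intro hFG
      obtain ⟨P, hP, hEP, hFP⟩ := ih (fun Y hY => hFG (Set.mem_insert_of_mem _ hY))
      have hX : X ∈ G := hFG (Set.mem_insert _ _)
      obtain ⟨C, hC, hEC, hXC⟩ := hcyc X hX
      refine ⟨P * C, hmul P hP C hC, ?_, ?_⟩
      · have := Set.mul_subset_mul hEP hEC
        rwa [(hid E hE).1] at this
      · intro Y hY
        rcases Set.mem_insert_iff.1 hY with rfl | hY'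
        · have := Set.mul_subset_mul hEP hXC
          rwa [(hid _ hX).1] at this
        · have := Set.mul_subset_mul (hFP Y hY') hEC
          rwa [(hid Y (hFG hY)).2] at this
  obtain ⟨P, hP, -, h⟩ := hmain (G : Set (Set S)) (Set.toFinite _) subset_rfl
  exact hsub P hP _ (Set.sUnion_subset h)
end
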